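/- arXiv:1608.06730 — 4 statements merged into one kernel-verified Lean document; each statement's English description precedes it below -/
import Mathlib

section
/- There is a universal constant c > 0 such that for all μ, λ > 0 the following holds: if u₀, v₀ ∈ L²(ℝ³) are such that the Fourier transform û₀ is supported in {(ξ,η) ∈ ℝ×ℝ² : |ξ| < μ} and v̂₀ is supported in {(ξ,η) : |ξ| > λ}, then the product of the free KP-II evolutions satisfies the bilinear estimate ‖ S(t)u₀ · S(t)v₀ ‖_{L²(ℝ_t×ℝ³)} ≤ c μ ‖u₀‖_{L²(ℝ³)} ‖v₀‖_{L²(ℝ³)}. -/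
/-!
STATEMENT 5: bilinear estimate ‖S(t)u₀ · S(t)v₀‖_{L²(ℝ_t×ℝ³)} ≤ c μ ‖u₀‖₂ ‖v₀‖₂
for û₀ supported in {|ξ| < μ} and v̂₀ supported in {|ξ| > λ}.
Since u₀, v₀ are general L² functions, the statement is formulated (equivalently,
via Plancherel in the space variables) on the Fourier side: f = û₀, g = v̂₀ are
L² functions with the stated supports, and the spatial Fourier transform of the
product S(t)u₀ · S(t)v₀ is the (everywhere absolutely convergent) convolution
prodHat f g (t,·) of e^{itω}f and e^{itω}g.
-/

noncomputable section

open MeasureTheory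
open scoped ENNReal

abbrev E2 := EuclideanSpace ℝ (Fin 2)

/-- KP-II dispersion relation ω(ξ,η) = ξ³ − |η|²/ξ. -/
def omega (ζ : ℝ × E2) : ℝ := ζ.1 ^ 3 - ‖ζ.2‖ ^ 2 / ζ.1

/-- Spatial Fourier transform of the product S(t)u₀·S(t)v₀, where f = û₀, g = v̂₀:
the convolution of e^{itω}f and e^{itω}g. -/
def prodHat (f g : ℝ × E2 → ℂ) (t : ℝ) (ζ : ℝ × E2) : ℂ :=
  ∫ ζ₁ : ℝ × E2,
    (Complex.exp (Complex.I * ((t * omega ζ₁ : ℝ) : ℂ)) * f ζ₁) *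
    (Complex.exp (Complex.I * ((t * omega (ζ.1 - ζ₁.1, ζ.2 - ζ₁.2) : ℝ) : ℂ)) *
      g (ζ.1 - ζ₁.1, ζ.2 - ζ₁.2))


lemma radial_bound (g : ℝ → ℝ) (hg0 : ∀ x, 0 ≤ g x) (hg : Integrable g) :
    ∫⁻ z : E2, ENNReal.ofReal (g (‖z‖ ^ 2)) ≤ ENNReal.ofReal (Real.pi * ∫ s, g s) := by
  have hfr : Module.finrank ℝ E2 = 2 := by simp
  have h2 : (2:ℝ) ≠ 0 := two_ne_zero
  have hi : IntegrableOn (fun y : ℝ => y * g (y ^ 2)) (Set.Ioi 0) := by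
    have := (integrableOn_Ioi_comp_rpow_iff' g h2).2 hg.integrableOn
    refine this.congr_fun (fun x hx => ?_) measurableSet_Ioi
    simp only [smul_eq_mul]
    norm_num
  have hint : Integrable (fun z : E2 => g (‖z‖ ^ 2)) := by
    have := (integrable_fun_norm_addHaar (volume : Measure E2) (f := fun r => g (r ^ 2))).2
    apply this
    rw [hfr]
    simpa using hi
  rw [← ofReal_integral_eq_lintegral_ofReal hint (Filter.Eventually.of_forall fun z => hg0 _)]
  apply ENNReal.ofReal_le_ofReal
  have h1 := integral_fun_norm_addHaar (volume : Measure E2) (fun r => g (r ^ 2))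
  rw [h1, hfr]
  have h3 := integral_comp_rpow_Ioi_of_pos (g := g) (p := 2) two_pos
  have h4 : ∫ x in Set.Ioi (0:ℝ), (2 * x ^ ((2:ℝ) - 1)) • g (x ^ (2:ℝ)) = 2 * ∫ y in Set.Ioi (0:ℝ), y * g (y ^ 2) := by
    rw [← integral_const_mul]
    refine setIntegral_congr_fun measurableSet_Ioi (fun x hx => ?_)
    simp only [smul_eq_mul]
    norm_num
    ring
  rw [h4] at h3
  have h5 : ∫ y in Set.Ioi (0:ℝ), g y ≤ ∫ y, g y :=
    setIntegral_le_integral hg (Filter.Eventually.of_forall hg0)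
  have h6 : (volume : Measure E2).real (Metric.ball 0 1) = Real.pi := by
    rw [Measure.real, EuclideanSpace.volume_ball_fin_two]
    simp [Real.pi_pos.le]
  rw [h6]
  simp only [smul_eq_mul, nsmul_eq_mul]
  have := Real.pi_pos
  norm_num
  calc 2 * (Real.pi * ∫ y in Set.Ioi (0:ℝ), y * g (y ^ 2)) = Real.pi * ∫ y in Set.Ioi (0:ℝ), g y := by
        rw [← h3]; ring
    _ ≤ _ := by gcongr

/-- Fourier transform of the Gaussian weight. -/
def kern (ε s : ℝ) : ℝ := Real.sqrt (Real.pi / ε) * Real.exp (-(1 / (4 * ε)) * s ^ 2)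

lemma kern_nonneg (ε s : ℝ) : 0 ≤ kern ε s := by unfold kern; positivity

lemma kern_neg (ε s : ℝ) : kern ε (-s) = kern ε s := by simp [kern]

lemma kern_cont (ε : ℝ) : Continuous (kern ε) := by unfold kern; fun_prop

lemma kern_integrable {ε : ℝ} (hε : 0 < ε) : Integrable (kern ε) := by
  unfold kern
  exact (integrable_exp_neg_mul_sq (by positivity)).const_mul _

lemma kern_integral {ε : ℝ} (hε : 0 < ε) : ∫ s, kern ε s = 2 * Real.pi := by
  unfold kern
  rw [integral_const_mul, integral_gaussian, ← Real.sqrt_mul (by positivity)]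
  rw [show Real.pi / ε * (Real.pi / (1 / (4 * ε))) = (2 * Real.pi) ^ 2 by field_simp; norm_num]
  exact Real.sqrt_sq (by positivity)

lemma kern_bound {ε A : ℝ} (hε : 0 < ε) (hA : A ≠ 0) (τ : ℝ) (c : E2) :
    ∫⁻ z : E2, ENNReal.ofReal (kern ε (A * ‖z - c‖ ^ 2 + τ))
      ≤ ENNReal.ofReal (2 * Real.pi ^ 2 / |A|) := by
  rw [lintegral_sub_right_eq_self (fun z : E2 => ENNReal.ofReal (kern ε (A * ‖z‖ ^ 2 + τ))) c]
  have hi : Integrable (fun s => kern ε (A * s + τ)) :=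
    ((kern_integrable hε).comp_add_right τ).comp_mul_left' hA
  refine (radial_bound (fun s => kern ε (A * s + τ)) (fun s => kern_nonneg _ _) hi).trans ?_
  apply le_of_eq
  congr 1
  have := Measure.integral_comp_mul_left (fun s => kern ε (s + τ)) A
  rw [this, integral_add_right_eq_self (fun s => kern ε s), kern_integral hε, abs_inv]
  simp only [smul_eq_mul]
  field_simp

lemma gauss_fourier {ε : ℝ} (hε : 0 < ε) (s : ℝ) :
    ∫ t : ℝ, Complex.exp (Complex.I * ((t * s : ℝ) : ℂ)) * ((Real.exp (-ε * t ^ 2) : ℝ) : ℂ)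
      = (kern ε s : ℂ) := by
  have h := fourierIntegral_gaussian (b := (ε : ℂ)) (by simpa using hε) (s : ℂ)
  have e1 : ((Real.pi : ℂ) / (ε : ℂ)) ^ (1 / 2 : ℂ) = ((Real.sqrt (Real.pi / ε) : ℝ) : ℂ) := by
    rw [Real.sqrt_eq_rpow, Complex.ofReal_cpow (by positivity)]
    push_cast; rfl
  rw [e1] at h
  unfold kern
  push_cast at h ⊢
  convert h using 3
  · ring_nf
  · ring

lemma conj_exp_I (x : ℝ) : (starRingEnd ℂ) (Complex.exp (Complex.I * (x : ℂ))) = Complex.exp (Complex.I * ((-x : ℝ) : ℂ)) := by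
  rw [← Complex.exp_conj]; simp

lemma ttstar {ε : ℝ} (hε : 0 < ε) (H : E2 → ℂ) (Φ : E2 → ℝ) (hH : StronglyMeasurable H)
    (hΦ : Measurable Φ) :
    ∫⁻ t : ℝ, ENNReal.ofReal (Real.exp (-ε * t ^ 2)) *
        ‖∫ z, Complex.exp (Complex.I * ((t * Φ z : ℝ) : ℂ)) * H z‖ₑ ^ 2
      ≤ ∫⁻ z, ∫⁻ z', ‖H z‖ₑ * ‖H z'‖ₑ * ENNReal.ofReal (kern ε (Φ z - Φ z')) := by
  have hmE : ∀ t : ℝ, Measurable (fun z => Complex.exp (Complex.I * ((t * Φ z : ℝ) : ℂ))) := by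
    intro t; fun_prop
  have hnE : ∀ x : ℝ, ‖Complex.exp (Complex.I * (x : ℂ))‖ = 1 := by
    intro x; rw [mul_comm]; exact Complex.norm_exp_ofReal_mul_I x
  by_cases hI : Integrable H
  swap
  · have : ∀ t : ℝ, ∫ z, Complex.exp (Complex.I * ((t * Φ z : ℝ) : ℂ)) * H z = 0 := by
      intro t
      apply integral_undef
      intro h
      apply hI
      refine h.mono hH.aestronglyMeasurable (Filter.Eventually.of_forall fun z => ?_)
      rw [norm_mul, hnE, one_mul]
    simp only [this]
    simp
  have hg : Integrable (fun t : ℝ => ((Real.exp (-ε * t ^ 2) : ℝ) : ℂ)) :=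
    (integrable_exp_neg_mul_sq hε).ofReal
  -- triple function
  set T : ℝ × (E2 × E2) → ℂ := fun p => Complex.exp (Complex.I * ((p.1 * (Φ p.2.1 - Φ p.2.2) : ℝ) : ℂ)) * ((Real.exp (-ε * p.1 ^ 2) : ℝ) : ℂ) * (H p.2.1 * (starRingEnd ℂ) (H p.2.2)) with hT
  have hHH : Integrable (fun p : E2 × E2 => H p.1 * (starRingEnd ℂ) (H p.2)) (volume.prod volume) := by
    refine hI.mul_prod (g := fun z => (starRingEnd ℂ) (H z)) ?_
    exact hI.norm.mono (Complex.continuous_conj.comp_stronglyMeasurable hH).aestronglyMeasurable (by simp)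
  have hTI : Integrable T (volume.prod (volume.prod volume)) := by
    have h1 := hg.mul_prod hHH
    refine h1.norm.mono ?_ (Filter.Eventually.of_forall fun p => ?_)
    · apply Measurable.aestronglyMeasurable
      have := hH.measurable
      have h3 : Measurable (starRingEnd ℂ) := Complex.continuous_conj.measurable
      simp only [hT]
      fun_prop
    · simp only [hT, norm_mul, hnE, one_mul, norm_norm, le_refl]
  have hsq : ∀ t : ℝ, ((Real.exp (-ε * t ^ 2) * ‖∫ z, Complex.exp (Complex.I * ((t * Φ z : ℝ) : ℂ)) * H z‖ ^ 2 : ℝ) : ℂ)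
      = ∫ p : E2 × E2, T (t, p) ∂(volume.prod volume) := by
    intro t
    have h1 := integral_prod_mul (μ := (volume : Measure E2)) (ν := (volume : Measure E2))
      (fun z => Complex.exp (Complex.I * ((t * Φ z : ℝ) : ℂ)) * H z)
      (fun z => (starRingEnd ℂ) (Complex.exp (Complex.I * ((t * Φ z : ℝ) : ℂ)) * H z))
    rw [integral_conj, Complex.mul_conj, Complex.normSq_eq_norm_sq] at h1
    rw [Complex.ofReal_mul, ← h1, ← integral_const_mul]
    congr 1
    ext p
    simp only [hT, map_mul, conj_exp_I]
    rw [show ((t * (Φ p.1 - Φ p.2) : ℝ) : ℂ) = ((t * Φ p.1 : ℝ) : ℂ) + ((-(t * Φ p.2) : ℝ) : ℂ) by push_cast; ring, mul_add, Complex.exp_add]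
    ring
  have hLI : Integrable (fun t : ℝ => Real.exp (-ε * t ^ 2) * ‖∫ z, Complex.exp (Complex.I * ((t * Φ z : ℝ) : ℂ)) * H z‖ ^ 2) := by
    have h1 := hTI.integral_prod_left
    simp only [← hsq] at h1
    exact h1.re
  have hkey : ((∫ t : ℝ, Real.exp (-ε * t ^ 2) * ‖∫ z, Complex.exp (Complex.I * ((t * Φ z : ℝ) : ℂ)) * H z‖ ^ 2 : ℝ) : ℂ)
      = ∫ p : E2 × E2, (kern ε (Φ p.1 - Φ p.2) : ℂ) * (H p.1 * (starRingEnd ℂ) (H p.2)) ∂(volume.prod volume) := by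
    rw [← integral_complex_ofReal]
    simp only [hsq]
    rw [integral_integral_swap hTI]
    congr 1
    ext p
    simp only [hT]
    rw [integral_mul_const, gauss_fourier hε]
  have hL : ∫⁻ t : ℝ, ENNReal.ofReal (Real.exp (-ε * t ^ 2)) *
        ‖∫ z, Complex.exp (Complex.I * ((t * Φ z : ℝ) : ℂ)) * H z‖ₑ ^ 2 =
      ENNReal.ofReal (∫ t : ℝ, Real.exp (-ε * t ^ 2) * ‖∫ z, Complex.exp (Complex.I * ((t * Φ z : ℝ) : ℂ)) * H z‖ ^ 2) := by
    rw [ofReal_integral_eq_lintegral_ofReal hLI (Filter.Eventually.of_forall fun t => by positivity)]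
    congr 1
    ext t
    rw [ENNReal.ofReal_mul (by positivity), ENNReal.ofReal_pow (norm_nonneg _), ofReal_norm]
  rw [hL]
  have hfin : ENNReal.ofReal (∫ t : ℝ, Real.exp (-ε * t ^ 2) * ‖∫ z, Complex.exp (Complex.I * ((t * Φ z : ℝ) : ℂ)) * H z‖ ^ 2)
     ≤ ‖((∫ t : ℝ, Real.exp (-ε * t ^ 2) * ‖∫ z, Complex.exp (Complex.I * ((t * Φ z : ℝ) : ℂ)) * H z‖ ^ 2 : ℝ) : ℂ)‖ₑ := by
    rw [← ofReal_norm]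
    apply ENNReal.ofReal_le_ofReal
    rw [Complex.norm_real]
    exact le_abs_self _
  refine hfin.trans ?_
  rw [hkey]
  refine (enorm_integral_le_lintegral_enorm _).trans ?_
  have hm := hH.measurable
  have hkm := (kern_cont ε).measurable
  have h3 : Measurable (starRingEnd ℂ) := Complex.continuous_conj.measurable
  rw [lintegral_prod _ (by fun_prop)]
  apply le_of_eq
  congr 1; ext z; congr 1; ext z'
  rw [enorm_mul, enorm_mul]
  have e1 : ‖(kern ε (Φ z - Φ z') : ℂ)‖ₑ = ENNReal.ofReal (kern ε (Φ z - Φ z')) := by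
    rw [← ofReal_norm, Complex.norm_real, Real.norm_of_nonneg (kern_nonneg _ _)]
  have e2 : ‖(starRingEnd ℂ) (H z')‖ₑ = ‖H z'‖ₑ := by
    rw [← ofReal_norm, ← ofReal_norm, RCLike.norm_conj]
  simp only [e1, e2]
  ring

lemma quad_form (a b : ℝ) (h : a + b ≠ 0) (y : E2) :
    ∃ (c : E2) (τ : ℝ), ∀ z : E2, a * ‖z‖ ^ 2 + b * ‖y - z‖ ^ 2 = (a + b) * ‖z - c‖ ^ 2 + τ := by
  refine ⟨(b / (a + b)) • y, b * ‖y‖ ^ 2 - (a + b) * ‖(b / (a + b)) • y‖ ^ 2, fun z => ?_⟩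
  rw [norm_sub_sq_real, norm_sub_sq_real, real_inner_smul_right, real_inner_comm]
  field_simp
  ring

lemma ennreal_amgm (x y : ℝ≥0∞) : 2 * (x * y) ≤ x ^ 2 + y ^ 2 := by
  rcases eq_or_ne x ⊤ with rfl | hx
  · simp
  rcases eq_or_ne y ⊤ with rfl | hy
  · simp
  lift x to NNReal using hx
  lift y to NNReal using hy
  norm_cast
  rw [← mul_assoc]
  exact two_mul_le_add_sq x y

lemma schur_sym (m K : E2 → E2 → ℝ≥0∞) (hm : Measurable (Function.uncurry m))
    (hK : Measurable (Function.uncurry K)) (hs : ∀ z z', K z z' = K z' z) :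
    ∫⁻ z, ∫⁻ z', m z z' * m z' z * K z z' ≤ ∫⁻ z, ∫⁻ z', m z z' ^ 2 * K z z' := by
  have hm' : Measurable (fun p : E2 × E2 => m p.1 p.2) := hm
  have hm'' : Measurable (fun p : E2 × E2 => m p.2 p.1) := hm.comp measurable_swap
  have hK' : Measurable (fun p : E2 × E2 => K p.1 p.2) := hK
  have hms : ∀ z, Measurable (fun z' => m z z') := fun z => hm'.comp (by fun_prop : Measurable fun z' : E2 => (z, z'))
  have hms' : ∀ z, Measurable (fun z' => m z' z) := fun z => hm'.comp (by fun_prop : Measurable fun z' : E2 => (z', z))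
  have hKs : ∀ z, Measurable (fun z' => K z z') := fun z => hK'.comp (by fun_prop : Measurable fun z' : E2 => (z, z'))
  have h1 : 2 * ∫⁻ z, ∫⁻ z', m z z' * m z' z * K z z' ≤
      2 * ∫⁻ z, ∫⁻ z', m z z' ^ 2 * K z z' := by
    calc 2 * ∫⁻ z, ∫⁻ z', m z z' * m z' z * K z z'
        = ∫⁻ z, ∫⁻ z', 2 * (m z z' * m z' z) * K z z' := by
          rw [← lintegral_const_mul' _ _ (by simp)]
          congr 1; ext z
          rw [← lintegral_const_mul' _ _ (by simp)]
          congr 1; ext z'; ring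
      _ ≤ ∫⁻ z, ∫⁻ z', (m z z' ^ 2 * K z z' + m z' z ^ 2 * K z z') := by
          refine lintegral_mono fun z => lintegral_mono fun z' => ?_
          simp only []
          rw [← add_mul]
          gcongr
          exact ennreal_amgm _ _
      _ = ∫⁻ z, ((∫⁻ z', m z z' ^ 2 * K z z') + ∫⁻ z', m z' z ^ 2 * K z z') := by
          congr 1; ext z
          rw [lintegral_add_left]
          exact ((hms z).pow_const 2).mul (hKs z)
      _ = (∫⁻ z, ∫⁻ z', m z z' ^ 2 * K z z') + ∫⁻ z, ∫⁻ z', m z' z ^ 2 * K z z' := by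
          rw [lintegral_add_left]
          exact ((hm'.pow_const 2).mul hK').lintegral_prod_right'
      _ = 2 * ∫⁻ z, ∫⁻ z', m z z' ^ 2 * K z z' := by
          rw [two_mul]
          congr 1
          rw [lintegral_lintegral_swap]
          · congr 1; ext z; congr 1; ext z'; rw [hs]
          · exact ((hm''.pow_const 2).mul hK').aemeasurable
  exact (ENNReal.mul_le_mul_iff_right (by simp) (by simp)).1 h1

/-- the phase -/
def phs (ξ₁ ξ₂ : ℝ) (x z : E2) : ℝ := omega (ξ₁, z) + omega (ξ₂, x - z)

lemma omega_meas : Measurable omega := by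
  unfold omega
  fun_prop

lemma phs_meas {α : Type*} [MeasurableSpace α] {a b : α → ℝ} {u v : α → E2} (ha : Measurable a)
    (hb : Measurable b) (hu : Measurable u) (hv : Measurable v) :
    Measurable (fun q => phs (a q) (b q) (u q) (v q)) := by
  have := omega_meas
  unfold phs
  fun_prop

lemma K_meas (ε : ℝ) (ξ₁ ξ₂ : ℝ) {α : Type*} [MeasurableSpace α] {u v w : α → E2} 
    (hu : Measurable u) (hv : Measurable v) (hw : Measurable w) :
    Measurable (fun q => ENNReal.ofReal (kern ε (phs ξ₁ ξ₂ (u q) (v q) - phs ξ₁ ξ₂ (u q) (w q)))) := by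
  have hkm : Measurable (kern ε) := (kern_cont ε).measurable
  have h1 := phs_meas (measurable_const (a := ξ₁)) (measurable_const (a := ξ₂)) hu hv
  have h2 := phs_meas (measurable_const (a := ξ₁)) (measurable_const (a := ξ₂)) hu hw
  exact (hkm.comp (h1.sub h2)).ennreal_ofReal

lemma bilin_form {ε : ℝ} (hε : 0 < ε) {ξ₁ : ℝ} (h1 : ξ₁ ≠ 0) (ξ₂ : ℝ) (φ γ : E2 → ℝ≥0∞)
    (hφ : Measurable φ) (hγ : Measurable γ) :
    ∫⁻ x : E2, ∫⁻ z, ∫⁻ z', (φ z * γ (x - z)) * (φ z' * γ (x - z')) *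
        ENNReal.ofReal (kern ε (phs ξ₁ ξ₂ x z - phs ξ₁ ξ₂ x z'))
      ≤ ENNReal.ofReal (2 * Real.pi ^ 2 * |ξ₁|) * ((∫⁻ z, φ z ^ 2) * ∫⁻ z, γ z ^ 2) := by
  have hsym : ∀ x z z', ENNReal.ofReal (kern ε (phs ξ₁ ξ₂ x z - phs ξ₁ ξ₂ x z')) =
      ENNReal.ofReal (kern ε (phs ξ₁ ξ₂ x z' - phs ξ₁ ξ₂ x z)) := by
    intro x z z'
    rw [← kern_neg, neg_sub]
  have hdiff : ∀ x z z', phs ξ₁ ξ₂ x z - phs ξ₁ ξ₂ x z' =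
      (ξ₁⁻¹ * ‖z'‖ ^ 2 + ξ₂⁻¹ * ‖x - z'‖ ^ 2) - (ξ₁⁻¹ * ‖z‖ ^ 2 + ξ₂⁻¹ * ‖x - z‖ ^ 2) := by
    intro x z z'
    simp only [phs, omega]
    ring
  have ha : ξ₁⁻¹ ≠ 0 := inv_ne_zero h1
  have habs : ∀ b : ℝ, 0 ≤ ξ₁⁻¹ * b → ξ₁⁻¹ + b ≠ 0 ∧ 2 * Real.pi ^ 2 / |ξ₁⁻¹ + b| ≤ 2 * Real.pi ^ 2 * |ξ₁| := by
    intro b hb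
    have h3 : |ξ₁⁻¹| ≤ |ξ₁⁻¹ + b| := by
      apply sq_le_sq.1
      nlinarith [sq_nonneg b]
    have h4 : 0 < |ξ₁⁻¹| := abs_pos.2 ha
    refine ⟨abs_pos.1 (h4.trans_le h3), ?_⟩
    calc 2 * Real.pi ^ 2 / |ξ₁⁻¹ + b| ≤ 2 * Real.pi ^ 2 / |ξ₁⁻¹| := by gcongr
      _ = _ := by rw [abs_inv]; field_simp
  rcases le_total 0 (ξ₁⁻¹ * ξ₂⁻¹) with hs | hs
  · obtain ⟨hne, hle⟩ := habs _ hs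
    calc _ ≤ ∫⁻ x : E2, ∫⁻ z, ∫⁻ z', (φ z * γ (x - z)) ^ 2 *
        ENNReal.ofReal (kern ε (phs ξ₁ ξ₂ x z - phs ξ₁ ξ₂ x z')) := by
          refine lintegral_mono fun x => ?_
          exact schur_sym (fun z _ => φ z * γ (x - z)) _ (by unfold Function.uncurry; fun_prop) (K_meas ε ξ₁ ξ₂ (measurable_const (a := x)) measurable_fst measurable_snd) (hsym x)
      _ ≤ ∫⁻ x : E2, ∫⁻ z, (φ z * γ (x - z)) ^ 2 * ENNReal.ofReal (2 * Real.pi ^ 2 * |ξ₁|) := by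
          refine lintegral_mono fun x => lintegral_mono fun z => ?_
          simp only []
          rw [lintegral_const_mul]
          · gcongr
            obtain ⟨c, τ, hc⟩ := quad_form ξ₁⁻¹ ξ₂⁻¹ hne x
            simp only [hdiff, hc]
            simp only [add_sub_assoc]
            exact (kern_bound hε hne _ c).trans (ENNReal.ofReal_le_ofReal hle)
          · exact K_meas ε ξ₁ ξ₂ (by fun_prop) (by fun_prop) (by fun_prop)
      _ = _ := by
          rw [lintegral_lintegral_swap]
          · simp only [mul_pow]
            have : ∀ z : E2, ∫⁻ x : E2, φ z ^ 2 * γ (x - z) ^ 2 * ENNReal.ofReal (2 * Real.pi ^ 2 * |ξ₁|)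
                = φ z ^ 2 * ((∫⁻ y, γ y ^ 2) * ENNReal.ofReal (2 * Real.pi ^ 2 * |ξ₁|)) := by
              intro z
              rw [lintegral_mul_const _ (by fun_prop), lintegral_const_mul _ (by fun_prop),
                lintegral_sub_right_eq_self (fun y => γ y ^ 2) z, mul_assoc]
            simp only [this]
            rw [lintegral_mul_const _ (by fun_prop)]
            ring
          · unfold Function.uncurry; fun_prop
  · obtain ⟨hne, hle⟩ := habs (-ξ₂⁻¹) (by linarith)
    calc _ = ∫⁻ x : E2, ∫⁻ z, ∫⁻ z', (φ z * γ (x - z')) * (φ z' * γ (x - z)) *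
        ENNReal.ofReal (kern ε (phs ξ₁ ξ₂ x z - phs ξ₁ ξ₂ x z')) := by
          congr 1; ext x; congr 1; ext z; congr 1; ext z'; ring
      _ ≤ ∫⁻ x : E2, ∫⁻ z, ∫⁻ z', (φ z * γ (x - z')) ^ 2 *
        ENNReal.ofReal (kern ε (phs ξ₁ ξ₂ x z - phs ξ₁ ξ₂ x z')) := by
          refine lintegral_mono fun x => ?_
          exact schur_sym (fun z z' => φ z * γ (x - z')) _ (by unfold Function.uncurry; fun_prop) (K_meas ε ξ₁ ξ₂ (measurable_const (a := x)) measurable_fst measurable_snd) (hsym x)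
      _ = ∫⁻ z : E2, ∫⁻ x : E2, ∫⁻ z', (φ z * γ (x - z')) ^ 2 *
        ENNReal.ofReal (kern ε (phs ξ₁ ξ₂ x z - phs ξ₁ ξ₂ x z')) := by
          rw [lintegral_lintegral_swap]
          refine Measurable.aemeasurable ?_
          refine Measurable.lintegral_prod_right' (f := fun p : (E2 × E2) × E2 => (φ p.1.2 * γ (p.1.1 - p.2)) ^ 2 *
            ENNReal.ofReal (kern ε (phs ξ₁ ξ₂ p.1.1 p.1.2 - phs ξ₁ ξ₂ p.1.1 p.2))) ?_
          refine Measurable.mul (by fun_prop) ?_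
          exact K_meas ε ξ₁ ξ₂ (by fun_prop) (by fun_prop) (by fun_prop)
      _ = ∫⁻ z : E2, ∫⁻ z' : E2, ∫⁻ x, (φ z * γ (x - z')) ^ 2 *
        ENNReal.ofReal (kern ε (phs ξ₁ ξ₂ x z - phs ξ₁ ξ₂ x z')) := by
          congr 1; ext z
          rw [lintegral_lintegral_swap]
          refine Measurable.aemeasurable ?_
          unfold Function.uncurry
          refine Measurable.mul (by fun_prop) ?_
          exact K_meas ε ξ₁ ξ₂ (by fun_prop) (by fun_prop) (by fun_prop)
      _ = ∫⁻ z : E2, ∫⁻ z' : E2, ∫⁻ s, (φ z * γ s) ^ 2 *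
        ENNReal.ofReal (kern ε (phs ξ₁ ξ₂ (s + z') z - phs ξ₁ ξ₂ (s + z') z')) := by
          congr 1; ext z; congr 1; ext z'
          rw [← lintegral_add_right_eq_self _ z']
          simp only [add_sub_cancel_right]
      _ = ∫⁻ z : E2, ∫⁻ s : E2, ∫⁻ z', (φ z * γ s) ^ 2 *
        ENNReal.ofReal (kern ε (phs ξ₁ ξ₂ (s + z') z - phs ξ₁ ξ₂ (s + z') z')) := by
          congr 1; ext z
          rw [lintegral_lintegral_swap]
          refine Measurable.aemeasurable ?_
          unfold Function.uncurry
          refine Measurable.mul (by fun_prop) ?_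
          exact K_meas ε ξ₁ ξ₂ (by fun_prop) (by fun_prop) (by fun_prop)
      _ ≤ ∫⁻ z : E2, ∫⁻ s : E2, (φ z * γ s) ^ 2 * ENNReal.ofReal (2 * Real.pi ^ 2 * |ξ₁|) := by
          refine lintegral_mono fun z => lintegral_mono fun s => ?_
          simp only []
          rw [lintegral_const_mul]
          · gcongr
            obtain ⟨c, τ, hc⟩ := quad_form ξ₁⁻¹ (-ξ₂⁻¹) hne (z - s)
            have e : ∀ z' : E2, phs ξ₁ ξ₂ (s + z') z - phs ξ₁ ξ₂ (s + z') z' =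
                (ξ₁⁻¹ + -ξ₂⁻¹) * ‖z' - c‖ ^ 2 + (τ + (ξ₂⁻¹ * ‖s‖ ^ 2 - ξ₁⁻¹ * ‖z‖ ^ 2)) := by
              intro z'
              rw [hdiff, ← add_assoc, ← hc, add_sub_cancel_right, ← norm_neg (s + z' - z),
                show -(s + z' - z) = z - s - z' by abel]
              ring
            simp only [e]
            exact (kern_bound hε hne _ c).trans (ENNReal.ofReal_le_ofReal hle)
          · exact K_meas ε ξ₁ ξ₂ (by fun_prop) (by fun_prop) (by fun_prop)
      _ = _ := by
          have : ∀ z : E2, ∫⁻ s : E2, (φ z * γ s) ^ 2 * ENNReal.ofReal (2 * Real.pi ^ 2 * |ξ₁|)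
                = φ z ^ 2 * ((∫⁻ y, γ y ^ 2) * ENNReal.ofReal (2 * Real.pi ^ 2 * |ξ₁|)) := by
            intro z
            simp only [mul_pow]
            rw [lintegral_mul_const _ (by fun_prop), lintegral_const_mul _ (by fun_prop), mul_assoc]
          simp only [this]
          rw [lintegral_mul_const _ (by fun_prop)]
          ring

/-- the sliced product -/
def slc (f g : ℝ × E2 → ℂ) (t ξ₁ ξ₂ : ℝ) (x : E2) : ℂ :=
  ∫ z : E2, Complex.exp (Complex.I * ((t * phs ξ₁ ξ₂ x z : ℝ) : ℂ)) * (f (ξ₁, z) * g (ξ₂, x - z))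

lemma slc_bound {ε : ℝ} (hε : 0 < ε) {ξ₁ : ℝ} (h1 : ξ₁ ≠ 0) (ξ₂ : ℝ) (f g : ℝ × E2 → ℂ)
    (hf : StronglyMeasurable f) (hg : StronglyMeasurable g) :
    ∫⁻ x : E2, ∫⁻ t : ℝ, ENNReal.ofReal (Real.exp (-ε * t ^ 2)) * ‖slc f g t ξ₁ ξ₂ x‖ₑ ^ 2
      ≤ ENNReal.ofReal (2 * Real.pi ^ 2 * |ξ₁|) *
        ((∫⁻ z, ‖f (ξ₁, z)‖ₑ ^ 2) * ∫⁻ z, ‖g (ξ₂, z)‖ₑ ^ 2) := by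
  have hfm := hf.measurable
  have hgm := hg.measurable
  refine le_trans ?_ (bilin_form hε h1 ξ₂ (fun z => ‖f (ξ₁, z)‖ₑ) (fun z => ‖g (ξ₂, z)‖ₑ)
    (by fun_prop) (by fun_prop))
  refine lintegral_mono fun x => ?_
  have := ttstar hε (fun z => f (ξ₁, z) * g (ξ₂, x - z)) (phs ξ₁ ξ₂ x)
    (by apply Measurable.stronglyMeasurable; fun_prop)
    (phs_meas measurable_const measurable_const measurable_const measurable_id)
  simp only [enorm_mul] at this
  simp only [slc]
  exact this

lemma slc_meas (f g : ℝ × E2 → ℂ) (hf : StronglyMeasurable f) (hg : StronglyMeasurable g)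
    {α : Type*} [MeasurableSpace α] {t a b : α → ℝ} {x : α → E2} (ht : Measurable t)
    (ha : Measurable a) (hb : Measurable b) (hx : Measurable x) :
    Measurable (fun q => slc f g (t q) (a q) (b q) (x q)) := by
  have hfm := hf.measurable
  have hgm := hg.measurable
  have h := phs_meas (α := α × E2) (ha.comp measurable_fst) (hb.comp measurable_fst)
    (hx.comp measurable_fst) measurable_snd
  simp only [Function.comp_apply] at h
  have hm : Measurable (fun p : α × E2 =>
    Complex.exp (Complex.I * ((t p.1 * phs (a p.1) (b p.1) (x p.1) p.2 : ℝ) : ℂ)) * (f (a p.1, p.2) * g (b p.1, x p.1 - p.2))) := by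
    fun_prop
  have := hm.stronglyMeasurable.integral_prod_right' (ν := (volume : Measure E2))
  exact this.measurable

lemma prodHat_meas (f g : ℝ × E2 → ℂ) (hf : StronglyMeasurable f) (hg : StronglyMeasurable g) :
    Measurable (fun q : ℝ × (ℝ × E2) => prodHat f g q.1 q.2) := by
  have hfm := hf.measurable
  have hgm := hg.measurable
  have ho := omega_meas
  have hm : Measurable (fun p : (ℝ × (ℝ × E2)) × (ℝ × E2) =>
    (Complex.exp (Complex.I * ((p.1.1 * omega p.2 : ℝ) : ℂ)) * f p.2) *
    (Complex.exp (Complex.I * ((p.1.1 * omega (p.1.2.1 - p.2.1, p.1.2.2 - p.2.2) : ℝ) : ℂ)) *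
      g (p.1.2.1 - p.2.1, p.1.2.2 - p.2.2))) := by
    fun_prop
  have := hm.stronglyMeasurable.integral_prod_right' (ν := (volume : Measure (ℝ × E2)))
  exact this.measurable

lemma prodHat_le (f g : ℝ × E2 → ℂ) (t ξ : ℝ) (x : E2) :
    ‖prodHat f g t (ξ, x)‖ₑ ≤ ∫⁻ ξ₁ : ℝ, ‖slc f g t ξ₁ (ξ - ξ₁) x‖ₑ := by
  unfold prodHat
  by_cases hI : Integrable (fun ζ₁ : ℝ × E2 => (Complex.exp (Complex.I * ((t * omega ζ₁ : ℝ) : ℂ)) * f ζ₁) *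
    (Complex.exp (Complex.I * ((t * omega (ξ - ζ₁.1, x - ζ₁.2) : ℝ) : ℂ)) *
      g (ξ - ζ₁.1, x - ζ₁.2)))
  swap
  · simp only
    rw [integral_undef hI]; simp
  simp only
  rw [Measure.volume_eq_prod] at hI ⊢
  rw [integral_prod _ hI]
  refine (enorm_integral_le_lintegral_enorm _).trans (le_of_eq ?_)
  congr 1; ext ξ₁
  congr 1
  unfold slc
  congr 1; ext z
  rw [show ((t * phs ξ₁ (ξ - ξ₁) x z : ℝ) : ℂ) = ((t * omega (ξ₁, z) : ℝ) : ℂ) + ((t * omega (ξ - ξ₁, x - z) : ℝ) : ℂ) by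
    unfold phs; push_cast; ring, mul_add, Complex.exp_add]
  ring

lemma cs_bound {μ : ℝ} (h : ℝ → ℝ≥0∞) (hm : Measurable h) (hs : ∀ x, μ ≤ |x| → h x = 0) :
    (∫⁻ x, h x) ^ 2 ≤ ENNReal.ofReal (2 * μ) * ∫⁻ x, h x ^ 2 := by
  set S : Set ℝ := Set.Ioo (-μ) μ
  have hS : MeasurableSet S := measurableSet_Ioo
  have e1 : ∫⁻ x, h x = ∫⁻ x, (h * (S.indicator 1 : ℝ → ℝ≥0∞)) x := by
    congr 1; ext x
    by_cases hx : x ∈ S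
    · simp [hx]
    · have : h x = 0 := hs x (by
        by_contra hc
        exact hx (abs_lt.1 (not_le.1 hc)))
      simp [this]
  have h2 := ENNReal.lintegral_mul_le_Lp_mul_Lq volume Real.HolderConjugate.two_two hm.aemeasurable
    (g := S.indicator 1) ((measurable_const.indicator hS).aemeasurable)
  have e2 : ∫⁻ x, (S.indicator (1 : ℝ → ℝ≥0∞) x) ^ (2:ℝ) = ENNReal.ofReal (2 * μ) := by
    have : ∀ x, (S.indicator (1 : ℝ → ℝ≥0∞) x) ^ (2:ℝ) = S.indicator 1 x := by
      intro x
      by_cases hx : x ∈ S <;> simp [hx]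
    simp only [this]
    rw [lintegral_indicator_one hS, Real.volume_Ioo]
    congr 1; ring
  rw [e2] at h2
  rw [e1]
  calc _ ≤ ((∫⁻ x, h x ^ (2:ℝ)) ^ (1 / (2:ℝ)) * ENNReal.ofReal (2 * μ) ^ (1 / (2:ℝ))) ^ 2 := by gcongr
    _ = _ := by
      rw [mul_pow, ← ENNReal.rpow_natCast, ← ENNReal.rpow_natCast, ← ENNReal.rpow_mul, ← ENNReal.rpow_mul, mul_comm]
      norm_num

lemma swap4 (P : ℝ × ℝ × E2 × ℝ → ℝ≥0∞) (hP : Measurable P) :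
    ∫⁻ q : ℝ × (ℝ × E2), ∫⁻ s : ℝ, P (q.1, q.2.1, q.2.2, s) =
      ∫⁻ ξ : ℝ, ∫⁻ s : ℝ, ∫⁻ x : E2, ∫⁻ t : ℝ, P (t, ξ, x, s) := by
  have m1 : Measurable (fun q : ℝ × (ℝ × E2) => ∫⁻ s : ℝ, P (q.1, q.2.1, q.2.2, s)) :=
    Measurable.lintegral_prod_right' (f := fun p : (ℝ × (ℝ × E2)) × ℝ => P (p.1.1, p.1.2.1, p.1.2.2, p.2)) (by fun_prop)
  rw [Measure.volume_eq_prod, lintegral_prod_symm _ m1.aemeasurable]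
  have m2 : Measurable (fun y : ℝ × E2 => ∫⁻ t : ℝ, ∫⁻ s : ℝ, P (t, y.1, y.2, s)) :=
    Measurable.lintegral_prod_left' (f := fun q : ℝ × (ℝ × E2) => ∫⁻ s : ℝ, P (q.1, q.2.1, q.2.2, s)) m1
  simp only
  rw [Measure.volume_eq_prod, lintegral_prod _ m2.aemeasurable]
  congr 1; ext ξ
  have : ∀ x : E2, ∫⁻ t : ℝ, ∫⁻ s : ℝ, P (t, ξ, x, s) = ∫⁻ s : ℝ, ∫⁻ t : ℝ, P (t, ξ, x, s) := by
    intro x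
    rw [lintegral_lintegral_swap]
    unfold Function.uncurry; fun_prop
  simp only [this]
  rw [lintegral_lintegral_swap]
  refine Measurable.aemeasurable ?_
  exact Measurable.lintegral_prod_right' (f := fun p : (E2 × ℝ) × ℝ => P (p.2, ξ, p.1.1, p.1.2)) (by fun_prop)

lemma main_eps {ε μ : ℝ} (hε : 0 < ε) (hμ : 0 < μ) (f g : ℝ × E2 → ℂ)
    (hf : StronglyMeasurable f) (hg : StronglyMeasurable g)
    (hs : ∀ ζ : ℝ × E2, f ζ ≠ 0 → |ζ.1| < μ) :
    ∫⁻ q : ℝ × (ℝ × E2), ENNReal.ofReal (Real.exp (-ε * q.1 ^ 2)) * ‖prodHat f g q.1 q.2‖ₑ ^ 2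
      ≤ ENNReal.ofReal ((2 * Real.pi * μ) ^ 2) * ((∫⁻ z, ‖f z‖ₑ ^ 2) * ∫⁻ z, ‖g z‖ₑ ^ 2) := by
  have hfm := hf.measurable
  have hgm := hg.measurable
  have hf0 : ∀ s, μ ≤ |s| → ∀ z, f (s, z) = 0 := by
    intro s h z
    by_contra hc
    exact absurd (hs _ hc) (not_lt.2 h)
  set P : ℝ × ℝ × E2 × ℝ → ℝ≥0∞ := fun p =>
    ENNReal.ofReal (Real.exp (-ε * p.1 ^ 2)) * ‖slc f g p.1 p.2.2.2 (p.2.1 - p.2.2.2) p.2.2.1‖ₑ ^ 2 with hP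
  have hPm : Measurable P := by
    have := slc_meas f g hf hg (α := ℝ × ℝ × E2 × ℝ) (t := fun p => p.1) (a := fun p => p.2.2.2)
      (b := fun p => p.2.1 - p.2.2.2) (x := fun p => p.2.2.1) (by fun_prop) (by fun_prop) (by fun_prop) (by fun_prop)
    simp only [hP]
    fun_prop
  set φ : ℝ → ℝ≥0∞ := fun s => ∫⁻ z : E2, ‖f (s, z)‖ₑ ^ 2 with hφ
  set γ : ℝ → ℝ≥0∞ := fun s => ∫⁻ z : E2, ‖g (s, z)‖ₑ ^ 2 with hγ
  have hφm : Measurable φ := Measurable.lintegral_prod_right' (f := fun p : ℝ × E2 => ‖f p‖ₑ ^ 2) (by fun_prop)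
  have hγm : Measurable γ := Measurable.lintegral_prod_right' (f := fun p : ℝ × E2 => ‖g p‖ₑ ^ 2) (by fun_prop)
  have eφ : ∫⁻ z, ‖f z‖ₑ ^ 2 = ∫⁻ s, φ s := by
    rw [Measure.volume_eq_prod, lintegral_prod _ (by fun_prop)]
  have eγ : ∫⁻ z, ‖g z‖ₑ ^ 2 = ∫⁻ s, γ s := by
    rw [Measure.volume_eq_prod, lintegral_prod _ (by fun_prop)]
  rw [eφ, eγ]
  calc _ ≤ ∫⁻ q : ℝ × (ℝ × E2), ENNReal.ofReal (2 * μ) * ∫⁻ s : ℝ, P (q.1, q.2.1, q.2.2, s) := by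
        refine lintegral_mono fun q => ?_
        obtain ⟨t, ξ, x⟩ := q
        simp only [hP]
        have hsm : Measurable (fun s => slc f g t s (ξ - s) x) :=
          slc_meas f g hf hg (by fun_prop) (by fun_prop) (by fun_prop) (by fun_prop)
        rw [lintegral_const_mul _ (by fun_prop), mul_left_comm]
        gcongr
        calc ‖prodHat f g t (ξ, x)‖ₑ ^ 2 ≤ (∫⁻ ξ₁ : ℝ, ‖slc f g t ξ₁ (ξ - ξ₁) x‖ₑ) ^ 2 := by
              gcongr; exact prodHat_le f g t ξ x
          _ ≤ _ := by
              refine cs_bound _ (by fun_prop) (fun s h => ?_)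
              simp only [slc, hf0 s h]
              simp
    _ = ENNReal.ofReal (2 * μ) * ∫⁻ ξ : ℝ, ∫⁻ s : ℝ, ∫⁻ x : E2, ∫⁻ t : ℝ, P (t, ξ, x, s) := by
        rw [lintegral_const_mul' _ _ ENNReal.ofReal_ne_top, swap4 P hPm]
    _ ≤ ENNReal.ofReal (2 * μ) * ∫⁻ ξ : ℝ, ∫⁻ s : ℝ, ENNReal.ofReal (2 * Real.pi ^ 2 * μ) * (φ s * γ (ξ - s)) := by
        refine mul_le_mul_right (lintegral_mono fun ξ => ?_) _
        have hne : ∀ᵐ s : ℝ, s ≠ 0 := by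
          simp [ae_iff]
        refine lintegral_mono_ae ?_
        filter_upwards [hne] with s hs0
        have hb := slc_bound hε hs0 (ξ - s) f g hf hg
        refine (le_trans (le_of_eq ?_) hb).trans ?_
        · simp only [hP]
        · rcases le_or_gt μ |s| with h | h
          · simp only [hf0 s h]
            simp
          · simp only [hφ, hγ]
            gcongr
    _ = ENNReal.ofReal (2 * μ) * (ENNReal.ofReal (2 * Real.pi ^ 2 * μ) * ((∫⁻ s, φ s) * ∫⁻ s, γ s)) := by
        congr 1
        have : ∀ ξ : ℝ, ∫⁻ s : ℝ, ENNReal.ofReal (2 * Real.pi ^ 2 * μ) * (φ s * γ (ξ - s)) =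
            ENNReal.ofReal (2 * Real.pi ^ 2 * μ) * ∫⁻ s : ℝ, (φ s * γ (ξ - s)) := fun ξ =>
          lintegral_const_mul' _ _ (by simp)
        simp only [this]
        rw [lintegral_const_mul' _ _ (by simp)]
        congr 1
        rw [lintegral_lintegral_swap (by unfold Function.uncurry; fun_prop)]
        have : ∀ s : ℝ, ∫⁻ ξ : ℝ, φ s * γ (ξ - s) = φ s * ∫⁻ y, γ y := by
          intro s
          rw [lintegral_const_mul _ (by fun_prop), lintegral_sub_right_eq_self γ s]
        simp only [this]
        rw [lintegral_mul_const _ hφm]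
    _ = _ := by
        rw [← mul_assoc, ← ENNReal.ofReal_mul (by positivity)]
        congr 2; ring

lemma main_sm {μ : ℝ} (hμ : 0 < μ) (f g : ℝ × E2 → ℂ)
    (hf : StronglyMeasurable f) (hg : StronglyMeasurable g)
    (hs : ∀ ζ : ℝ × E2, f ζ ≠ 0 → |ζ.1| < μ) :
    ∫⁻ q : ℝ × (ℝ × E2), ‖prodHat f g q.1 q.2‖ₑ ^ 2
      ≤ ENNReal.ofReal ((2 * Real.pi * μ) ^ 2) * ((∫⁻ z, ‖f z‖ₑ ^ 2) * ∫⁻ z, ‖g z‖ₑ ^ 2) := by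
  have hpm := prodHat_meas f g hf hg
  have hlim : ∀ q : ℝ × (ℝ × E2), Filter.Tendsto (fun n : ℕ =>
      ENNReal.ofReal (Real.exp (-(1 / ((n : ℝ) + 1)) * q.1 ^ 2)) * ‖prodHat f g q.1 q.2‖ₑ ^ 2)
      Filter.atTop (nhds (‖prodHat f g q.1 q.2‖ₑ ^ 2)) := by
    intro q
    have h1 : Filter.Tendsto (fun n : ℕ => Real.exp (-(1 / ((n : ℝ) + 1)) * q.1 ^ 2)) Filter.atTop (nhds 1) := by
      have h2 := (tendsto_one_div_add_atTop_nhds_zero_nat (𝕜 := ℝ)).neg.mul_const (q.1 ^ 2)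
      simpa [Function.comp_def] using (Real.continuous_exp.tendsto _).comp h2
    have h3 := ENNReal.tendsto_ofReal h1
    rw [ENNReal.ofReal_one] at h3
    have h4 := ENNReal.Tendsto.mul_const (b := ‖prodHat f g q.1 q.2‖ₑ ^ 2) h3 (Or.inl one_ne_zero)
    rwa [one_mul] at h4
  calc _ = ∫⁻ q : ℝ × (ℝ × E2), Filter.liminf (fun n : ℕ =>
      ENNReal.ofReal (Real.exp (-(1 / ((n : ℝ) + 1)) * q.1 ^ 2)) * ‖prodHat f g q.1 q.2‖ₑ ^ 2) Filter.atTop := by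
        congr 1; ext q; exact (hlim q).liminf_eq.symm
    _ ≤ Filter.liminf (fun n : ℕ => ∫⁻ q : ℝ × (ℝ × E2), 
      ENNReal.ofReal (Real.exp (-(1 / ((n : ℝ) + 1)) * q.1 ^ 2)) * ‖prodHat f g q.1 q.2‖ₑ ^ 2) Filter.atTop := 
        lintegral_liminf_le fun n => by fun_prop
    _ ≤ _ := by
        refine Filter.liminf_le_of_le (by isBoundedDefault) fun b hb => ?_
        obtain ⟨n, hn⟩ := hb.exists
        exact hn.trans (main_eps (by positivity) hμ f g hf hg hs)

lemma prodHat_congr {f f' g g' : ℝ × E2 → ℂ} (hf : f =ᵐ[volume] f') (hg : g =ᵐ[volume] g')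
    (t : ℝ) (ζ : ℝ × E2) : prodHat f g t ζ = prodHat f' g' t ζ := by
  unfold prodHat
  haveI : (volume : Measure (ℝ × E2)).IsAddLeftInvariant := by
    rw [Measure.volume_eq_prod]; infer_instance
  have h2 : ∀ᵐ ζ₁ : ℝ × E2, g (ζ - ζ₁) = g' (ζ - ζ₁) :=
    (quasiMeasurePreserving_sub_left volume ζ).ae hg
  refine integral_congr_ae ?_
  filter_upwards [hf, h2] with ζ₁ e1 e2
  have e3 : g (ζ.1 - ζ₁.1, ζ.2 - ζ₁.2) = g' (ζ.1 - ζ₁.1, ζ.2 - ζ₁.2) := e2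
  simp only [e1, e3]

lemma eLpNorm_two_sq {α : Type*} [MeasurableSpace α] (m : Measure α) (h : α → ℂ) :
    eLpNorm h 2 m ^ 2 = ∫⁻ x, ‖h x‖ₑ ^ 2 ∂m := by
  have := eLpNorm_nnreal_pow_eq_lintegral (p := 2) (μ := m) (f := h) (by simp)
  simpa using this

theorem kp3d_bilinear_lowhigh :
    ∃ c : ℝ, 0 < c ∧ ∀ μ lam : ℝ, 0 < μ → 0 < lam →
      ∀ f g : ℝ × E2 → ℂ, MemLp f 2 volume → MemLp g 2 volume →
        (∀ ζ : ℝ × E2, f ζ ≠ 0 → |ζ.1| < μ) →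
        (∀ ζ : ℝ × E2, g ζ ≠ 0 → lam < |ζ.1|) →
        eLpNorm (fun q : ℝ × (ℝ × E2) => prodHat f g q.1 q.2) 2 volume ≤
          ENNReal.ofReal (c * μ) * eLpNorm f 2 volume * eLpNorm g 2 volume := by

  refine ⟨2 * Real.pi, by positivity, fun μ lam hμ _ f g hf hg hs _ => ?_⟩
  set S : Set (ℝ × E2) := {ζ | |ζ.1| < μ} with hS
  have hSm : MeasurableSet S := measurableSet_lt (by fun_prop) measurable_const
  obtain ⟨f₁, hf₁, ef₁⟩ := hf.aestronglyMeasurable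
  obtain ⟨g₁, hg₁, eg₁⟩ := hg.aestronglyMeasurable
  have ef : f =ᵐ[volume] S.indicator f₁ := by
    filter_upwards [ef₁] with ζ h
    by_cases hζ : ζ ∈ S
    · simp [hζ, h]
    · rw [Set.indicator_of_notMem hζ]
      by_contra hc
      exact hζ (hs ζ hc)
  have hmain := main_sm hμ (S.indicator f₁) g₁ (hf₁.indicator hSm) hg₁ (fun ζ h => by
    by_contra hc
    have hc' : ζ ∉ S := hc
    exact h (Set.indicator_of_notMem hc' _))
  have e : (fun q : ℝ × (ℝ × E2) => prodHat f g q.1 q.2) =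
      fun q : ℝ × (ℝ × E2) => prodHat (S.indicator f₁) g₁ q.1 q.2 := by
    ext q; exact prodHat_congr ef eg₁ _ _
  rw [e, eLpNorm_congr_ae ef, eLpNorm_congr_ae eg₁]
  rw [← eLpNorm_two_sq, ← eLpNorm_two_sq, ← eLpNorm_two_sq,
    ENNReal.ofReal_pow (by positivity), ← mul_pow, ← mul_pow, ← mul_assoc] at hmain
  exact (ENNReal.pow_le_pow_left_iff (by norm_num)).1 hmain
end
end

section
/- Let d ≥ 1, let f, g : ℝ^d → ℂ be measurable and let h, l : ℝ^d → [0,∞] be measurable. Then, as an inequality in [0,∞], ∫_{ℝ^d} | ∫_{ℝ^d} f(x) h(x) g(z−x) l(z−x) dx |² dz ≤ ∫_{ℝ^d} ∫_{ℝ^d} ( ∫_{ℝ^d} h(z−y) l(z−x) dz ) |f(x)|² h(x) |g(y)|² l(y) dx dy; in other words ‖ (f h) ∗ (g l) ‖_{L²}² is bounded by the right-hand side. -/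
noncomputable section

open MeasureTheory
open scoped ENNReal

lemma two_mul_mul_le_aux (a b : NNReal) (W : ℝ≥0∞) :
    2 * ((a : ℝ≥0∞) * b * W) ≤ (a : ℝ≥0∞) ^ 2 * W + (b : ℝ≥0∞) ^ 2 * W := by
  have h1 : 2 * a * b ≤ a ^ 2 + b ^ 2 := two_mul_le_add_sq a b
  have h2 : 2 * (a : ℝ≥0∞) * b ≤ (a : ℝ≥0∞) ^ 2 + (b : ℝ≥0∞) ^ 2 := by exact_mod_cast h1
  calc 2 * ((a : ℝ≥0∞) * b * W) = (2 * (a : ℝ≥0∞) * b) * W := by ring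
    _ ≤ ((a : ℝ≥0∞) ^ 2 + (b : ℝ≥0∞) ^ 2) * W := by gcongr
    _ = _ := by ring

theorem weighted_convolution_cauchy_schwarz (d : ℕ) (hd : 1 ≤ d)
    (f g : EuclideanSpace ℝ (Fin d) → ℂ) (h l : EuclideanSpace ℝ (Fin d) → ℝ≥0∞)
    (hf : Measurable f) (hg : Measurable g) (hh : Measurable h) (hl : Measurable l) :
    ∫⁻ z, (∫⁻ x, (‖f x‖₊ : ℝ≥0∞) * h x * (‖g (z - x)‖₊ : ℝ≥0∞) * l (z - x)) ^ 2 ∂volume ≤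
      ∫⁻ x, ∫⁻ y, (∫⁻ z, h (z - y) * l (z - x)) *
        ((‖f x‖₊ : ℝ≥0∞) ^ 2 * h x * ((‖g y‖₊ : ℝ≥0∞) ^ 2 * l y)) ∂volume ∂volume := by
  let S : EuclideanSpace ℝ (Fin d) → EuclideanSpace ℝ (Fin d) → EuclideanSpace ℝ (Fin d) → ℝ≥0∞ :=
    fun z x y => ((‖f x‖₊ * ‖g (z - y)‖₊ : NNReal) : ℝ≥0∞) ^ 2 *
      (h x * l (z - x) * (h y * l (z - y)))
  have hS : Measurable (fun p : EuclideanSpace ℝ (Fin d) × EuclideanSpace ℝ (Fin d) ×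
      EuclideanSpace ℝ (Fin d) => S p.1 p.2.1 p.2.2) := by
    simp only [S]; fun_prop
  have key : ∀ z, (∫⁻ x, (‖f x‖₊ : ℝ≥0∞) * h x * (‖g (z - x)‖₊ : ℝ≥0∞) * l (z - x)) ^ 2
      ≤ ∫⁻ x, ∫⁻ y, S z x y := by
    intro z
    have hz : Measurable (fun p : EuclideanSpace ℝ (Fin d) × EuclideanSpace ℝ (Fin d) =>
        S z p.1 p.2) := by simp only [S]; fun_prop
    have hz2 : Measurable (fun p : EuclideanSpace ℝ (Fin d) × EuclideanSpace ℝ (Fin d) =>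
        S z p.2 p.1) := by simp only [S]; fun_prop
    have hφ : Measurable (fun x => (‖f x‖₊ : ℝ≥0∞) * h x * (‖g (z - x)‖₊ : ℝ≥0∞) * l (z - x)) := by
      fun_prop
    set φ := fun x => (‖f x‖₊ : ℝ≥0∞) * h x * (‖g (z - x)‖₊ : ℝ≥0∞) * l (z - x) with hφd
    have e1 : (∫⁻ x, φ x) ^ 2 = ∫⁻ x, ∫⁻ y, φ x * φ y := by
      rw [sq, ← lintegral_mul_const _ hφ]
      exact lintegral_congr fun x => (lintegral_const_mul _ hφ).symm
    have e2 : 2 * (∫⁻ x, φ x) ^ 2 ≤ 2 * ∫⁻ x, ∫⁻ y, S z x y := by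
      calc 2 * (∫⁻ x, φ x) ^ 2 = ∫⁻ x, ∫⁻ y, 2 * (φ x * φ y) := by
            rw [e1, ← lintegral_const_mul' _ _ (by simp)]
            exact lintegral_congr fun x => (lintegral_const_mul' _ _ (by simp)).symm
        _ ≤ ∫⁻ x, ∫⁻ y, (S z x y + S z y x) := by
            refine lintegral_mono fun x => lintegral_mono fun y => ?_
            have := two_mul_mul_le_aux (‖f x‖₊ * ‖g (z - y)‖₊) (‖f y‖₊ * ‖g (z - x)‖₊)
              (h x * l (z - x) * (h y * l (z - y)))
            refine le_trans (le_of_eq ?_) (this.trans (le_of_eq ?_))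
            · simp only [hφd]; push_cast; ring
            · simp only [S]; ring
        _ = (∫⁻ x, ∫⁻ y, S z x y) + ∫⁻ x, ∫⁻ y, S z y x := by
            rw [← lintegral_add_left (by exact hz.lintegral_prod_right')]
            exact lintegral_congr fun x => lintegral_add_left (hz.comp measurable_prodMk_left) _
        _ = _ := by
            rw [lintegral_lintegral_swap (f := fun x y => S z y x) hz2.aemeasurable, two_mul]
    exact (ENNReal.mul_le_mul_iff_right (by simp) (by simp)).1 e2
  calc _ ≤ ∫⁻ z, ∫⁻ x, ∫⁻ y, S z x y := lintegral_mono key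
    _ = ∫⁻ x, ∫⁻ z, ∫⁻ y, S z x y := by
        apply lintegral_lintegral_swap
        apply Measurable.aemeasurable
        have : Measurable (fun p : (EuclideanSpace ℝ (Fin d) × EuclideanSpace ℝ (Fin d)) ×
          EuclideanSpace ℝ (Fin d) => S p.1.1 p.1.2 p.2) := by simp only [S]; fun_prop
        exact this.lintegral_prod_right'
    _ = ∫⁻ x, ∫⁻ z, ∫⁻ y, S z x (z - y) := by
        refine lintegral_congr fun x => lintegral_congr fun z => ?_
        exact (lintegral_sub_left_eq_self (fun y => S z x y) z).symm
    _ = ∫⁻ x, ∫⁻ y, ∫⁻ z, S z x (z - y) := by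
        refine lintegral_congr fun x => ?_
        apply lintegral_lintegral_swap
        apply Measurable.aemeasurable
        simp only [S, Function.uncurry_def]; fun_prop
    _ ≤ _ := by
        refine le_of_eq (lintegral_congr fun x => lintegral_congr fun y => ?_)
        rw [← lintegral_mul_const _ (by fun_prop)]
        refine lintegral_congr fun z => ?_
        simp only [S, sub_sub_cancel]; push_cast; ring
end
end

section
/- Let m : ℝ² → ℂ be bounded, measurable and even (m(−s) = m(s) for all s ∈ ℝ²). For Schwartz functions u, v, w : ℝ×ℝ² → ℂ define the trilinear form I_m(u,v,w) = ∫_{(ℝ×ℝ²)²} m( (η₁/ξ₁ − η₂/ξ₂)/(ξ₁+ξ₂) ) û(ξ₁,η₁) v̂(ξ₂,η₂) ŵ(−ξ₁−ξ₂, −η₁−η₂) dξ₁ dη₁ dξ₂ dη₂ (the integrand is defined almost everywhere and the integral converges absolutely). Then I_m is fully symmetric: I_m(u,v,w) = I_m(σ(u,v,w)) for every permutation σ of the three arguments. -/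
/-!
STATEMENT 10: full symmetry of the trilinear form
I_m(u,v,w) = ∫∫ m((η₁/ξ₁ − η₂/ξ₂)/(ξ₁+ξ₂)) û(ζ₁) v̂(ζ₂) ŵ(−ζ₁−ζ₂) dζ₁ dζ₂
for bounded measurable even m : ℝ² → ℂ and Schwartz u, v, w:
I_m(u,v,w) = I_m(σ(u,v,w)) for every permutation σ of the three arguments.
-/

noncomputable section

open MeasureTheory

/-- (Nonunitary) Fourier transform on ℝ × ℝ². -/
def ft (f : ℝ × E2 → ℂ) (ζ : ℝ × E2) : ℂ :=
  ∫ z : ℝ × E2, Complex.exp (-Complex.I * ((z.1 * ζ.1 + inner ℝ z.2 ζ.2 : ℝ) : ℂ)) * f z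

/-- The trilinear form I_m(u,v,w). -/
def trilin (m : E2 → ℂ) (u v w : SchwartzMap (ℝ × E2) ℂ) : ℂ :=
  ∫ ζ₁ : ℝ × E2, ∫ ζ₂ : ℝ × E2,
    m ((ζ₁.1 + ζ₂.1)⁻¹ • (ζ₁.1⁻¹ • ζ₁.2 - ζ₂.1⁻¹ • ζ₂.2)) *
      ft (fun z => u z) ζ₁ * ft (fun z => v z) ζ₂ *
        ft (fun z => w z) (-(ζ₁.1 + ζ₂.1), -(ζ₁.2 + ζ₂.2))

instance haarE : (volume : Measure (ℝ × E2)).IsAddHaarMeasure :=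
  inferInstanceAs ((volume : Measure ℝ).prod (volume : Measure E2)).IsAddHaarMeasure

lemma ft_schwartz (u : SchwartzMap (ℝ × E2) ℂ) :
    ∃ g : SchwartzMap (ℝ × E2) ℂ, ∀ ζ, ft (fun z => u z) ζ = g ζ := by
  let e : WithLp 2 (ℝ × E2) ≃L[ℝ] ℝ × E2 := WithLp.prodContinuousLinearEquiv 2 ℝ ℝ E2
  let U : SchwartzMap (WithLp 2 (ℝ × E2)) ℂ := SchwartzMap.compCLMOfContinuousLinearEquiv ℂ e u
  have hpi : (2 * Real.pi)⁻¹ ≠ 0 := by positivity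
  let A : (ℝ × E2) ≃L[ℝ] WithLp 2 (ℝ × E2) :=
    (ContinuousLinearEquiv.smulLeft (Units.mk0 (2 * Real.pi)⁻¹ hpi)).trans e.symm
  refine ⟨SchwartzMap.compCLMOfContinuousLinearEquiv ℂ A (FourierTransform.fourier U), fun ζ => ?_⟩
  have h1 : (SchwartzMap.compCLMOfContinuousLinearEquiv ℂ A (FourierTransform.fourier U)) ζ
      = (FourierTransform.fourier (U : WithLp 2 (ℝ × E2) → ℂ)) (WithLp.toLp 2 ((2 * Real.pi)⁻¹ • ζ)) := rfl
  rw [h1, Real.fourier_eq', ft]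
  rw [← (WithLp.volume_preserving_ofLp ℝ E2).integral_comp
    (WithLp.homeomorphProd 2 ℝ E2).measurableEmbedding]
  congr 1
  ext z
  have h2 : U z = u z.ofLp := rfl
  rw [smul_eq_mul, h2]
  congr 2
  have hp : Real.pi ≠ 0 := Real.pi_ne_zero
  have : (-2 * Real.pi * inner ℝ z (WithLp.toLp 2 ((2 * Real.pi)⁻¹ • ζ)) : ℝ) =
      -(z.ofLp.1 * ζ.1 + inner ℝ z.ofLp.2 ζ.2) := by
    rw [WithLp.prod_inner_apply]
    simp only [Prod.smul_fst, Prod.smul_snd, inner_smul_right]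
    simp
    field_simp
    ring
  rw [this]
  push_cast
  ring

lemma trilin_swap12 (m : E2 → ℂ) (hmb : ∃ M : ℝ, ∀ s : E2, ‖m s‖ ≤ M)
    (hmm : Measurable m) (hme : ∀ s : E2, m (-s) = m s)
    (u v w : SchwartzMap (ℝ × E2) ℂ) : trilin m v u w = trilin m u v w := by
  obtain ⟨M, hM⟩ := hmb
  obtain ⟨gu, hu⟩ := ft_schwartz u
  obtain ⟨gv, hv⟩ := ft_schwartz v
  obtain ⟨gw, hw⟩ := ft_schwartz w
  unfold trilin
  simp only [hu, hv, hw]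
  rw [integral_integral_swap]
  · congr 1
    ext a
    congr 1
    ext b
    rw [← hme]
    have h1 : -((b.1 + a.1)⁻¹ • (b.1⁻¹ • b.2 - a.1⁻¹ • a.2)) =
      (a.1 + b.1)⁻¹ • (a.1⁻¹ • a.2 - b.1⁻¹ • b.2) := by
      rw [← smul_neg, neg_sub, add_comm]
    rw [h1, add_comm b.1, add_comm b.2]
    ring
  · have hI : Integrable (fun z : (ℝ × E2) × (ℝ × E2) => gv z.1 * gu z.2) (volume.prod volume) :=
      (gv.integrable).mul_prod (gu.integrable)
    have h1 : Integrable (fun z : (ℝ × E2) × (ℝ × E2) =>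
        m ((z.1.1 + z.2.1)⁻¹ • (z.1.1⁻¹ • z.1.2 - z.2.1⁻¹ • z.2.2)) * (gv z.1 * gu z.2))
        (volume.prod volume) := by
      refine hI.bdd_mul (c := M) ?_ (Filter.Eventually.of_forall fun z => hM _)
      apply Measurable.aestronglyMeasurable
      apply hmm.comp
      fun_prop
    obtain ⟨C, hC⟩ := gw.decay 0 0
    have h2 := h1.mul_bdd (c := C)
      (g := fun z => gw (-(z.1.1 + z.2.1), -(z.1.2 + z.2.2))) ?_
      (Filter.Eventually.of_forall fun z => ?_)
    · refine h2.congr (Filter.Eventually.of_forall fun z => ?_)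
      simp only [Function.uncurry]
      ring
    · apply Continuous.aestronglyMeasurable
      exact gw.continuous.comp (by fun_prop)
    · simpa using hC.2 (-(z.1.1 + z.2.1), -(z.1.2 + z.2.2))

lemma ae_fst_ne (c : ℝ) : ∀ᵐ z : ℝ × E2, z.1 ≠ c := by
  have h : ∀ᵐ x : ℝ, x ≠ c := by
    rw [ae_iff]; simp
  exact Measure.quasiMeasurePreserving_fst.ae h

lemma trilin_swap23 (m : E2 → ℂ) (hme : ∀ s : E2, m (-s) = m s)
    (u v w : SchwartzMap (ℝ × E2) ℂ) : trilin m u w v = trilin m u v w := by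
  unfold trilin
  apply integral_congr_ae
  filter_upwards [ae_fst_ne 0] with a ha
  rw [← integral_sub_left_eq_self _ volume (-a)]
  apply integral_congr_ae
  filter_upwards [ae_fst_ne 0, ae_fst_ne (-a.1)] with b hb hab
  have hs : a.1 + b.1 ≠ 0 := fun h => hab (by linarith)
  have e1 : (-(a.1 + (-a - b).1), -(a.2 + (-a - b).2)) = b := by
    ext1 <;> simp
  have e2 : -a - b = (-(a.1 + b.1), -(a.2 + b.2)) := by
    ext1 <;> simp <;> abel
  have e3 : (a.1 + (-a - b).1)⁻¹ • (a.1⁻¹ • a.2 - (-a - b).1⁻¹ • (-a - b).2) =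
      -((a.1 + b.1)⁻¹ • (a.1⁻¹ • a.2 - b.1⁻¹ • b.2)) := by
    rw [e2]
    ext i
    simp
    have h1 : -b.1 + -a.1 = -(a.1 + b.1) := by ring
    have h2 : -a.1 + -b.1 = -(a.1 + b.1) := by ring
    have h3 : -b.1 - a.1 = -(a.1 + b.1) := by ring
    have h4 : -a.1 - b.1 = -(a.1 + b.1) := by ring
    simp only [h1, h2, h3, h4, inv_neg]
    field_simp
    ring
  rw [e1, e3, hme, e2]
  ring

theorem trilin_fully_symmetric (m : E2 → ℂ) (hmb : ∃ M : ℝ, ∀ s : E2, ‖m s‖ ≤ M)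
    (hmm : Measurable m) (hme : ∀ s : E2, m (-s) = m s)
    (f : Fin 3 → SchwartzMap (ℝ × E2) ℂ) (σ : Equiv.Perm (Fin 3)) :
    trilin m (f (σ 0)) (f (σ 1)) (f (σ 2)) = trilin m (f 0) (f 1) (f 2) := by
  have A : ∀ u v w, trilin m v u w = trilin m u v w := trilin_swap12 m hmb hmm hme
  have B : ∀ u v w, trilin m u w v = trilin m u v w := trilin_swap23 m hme
  have n01 : σ 0 ≠ σ 1 := fun h => by simpa using σ.injective h
  have n02 : σ 0 ≠ σ 2 := fun h => by simpa using σ.injective h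
  have n12 : σ 1 ≠ σ 2 := fun h => by simpa using σ.injective h
  generalize σ 0 = i at *
  generalize σ 1 = j at *
  generalize σ 2 = k at *
  fin_cases i <;> fin_cases j <;> fin_cases k <;> simp at n01 n02 n12 <;>
    first
    | rfl
    | exact A _ _ _
    | exact B _ _ _
    | exact (A _ _ _).trans (B _ _ _)
    | exact (B _ _ _).trans (A _ _ _)
    | exact (A _ _ _).trans ((B _ _ _).trans (A _ _ _))
end
end

section
/- Let 1 ≤ q ≤ ∞ and 1 ≤ p < 2. Then the space l^q l^p L² embeds continuously into the space of tempered distributions: for every Schwartz function ψ on ℝ³ there is a constant C = C(ψ, p, q) such that for every Schwartz function φ on ℝ³ one has | ∫_{ℝ³} φ ψ dx dy | ≤ C ‖φ‖_{l^q l^p L²}. -/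
noncomputable section

open MeasureTheory
open scoped ENNReal

abbrev R3 := ℝ × ℝ × ℝ

/-- (Nonunitary) Fourier transform on ℝ³ = ℝ_x × ℝ²_y. -/
def ft3 (f : R3 → ℂ) (ζ : R3) : ℂ :=
  ∫ z : R3, Complex.exp (-Complex.I *
    ((z.1 * ζ.1 + z.2.1 * ζ.2.1 + z.2.2 * ζ.2.2 : ℝ) : ℂ)) * f z

/-- The region Γ_{λ,k} = {(ξ,η) : λ ≤ |ξ| < 2λ, |η/ξ − k|_∞ ≤ λ/2}. -/
def Gam (l : ℝ) (k : ℝ × ℝ) : Set R3 :=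
  {ζ : R3 | l ≤ |ζ.1| ∧ |ζ.1| < 2 * l ∧
    max |ζ.2.1 / ζ.1 - k.1| |ζ.2.2 / ζ.1 - k.2| ≤ l / 2}

/-- Fourier projection f_{Γ_{λ,k}}: inverse Fourier transform of the
characteristic function of Γ_{λ,k} times f̂. -/
def projG (l : ℝ) (k : ℝ × ℝ) (φ : SchwartzMap R3 ℂ) (z : R3) : ℂ :=
  ∫ ζ in Gam l k, Complex.exp (Complex.I *
    ((z.1 * ζ.1 + z.2.1 * ζ.2.1 + z.2.2 * ζ.2.2 : ℝ) : ℂ)) * ft3 (fun w => φ w) ζ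

/-- ℓ^p sum in ℝ≥0∞, with the usual modification for p = ∞. -/
def lpS (p : ℝ≥0∞) {ι : Type*} (f : ι → ℝ≥0∞) : ℝ≥0∞ :=
  if p = ∞ then ⨆ i, f i else (∑' i, f i ^ p.toReal) ^ (1 / p.toReal)

/-- The norm ‖φ‖_{l^q l^p L²} = (∑_{λ∈2^ℤ} λ^{q/2} (∑_{k∈λℤ²} ‖φ_{Γ_{λ,k}}‖_{L²}^p)^{q/p})^{1/q}. -/
def lqlpNorm (q p : ℝ≥0∞) (φ : SchwartzMap R3 ℂ) : ℝ≥0∞ :=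
  lpS q fun n : ℤ => ((2 : ℝ≥0∞) ^ n) ^ ((1 : ℝ) / 2) *
    lpS p fun m : ℤ × ℤ =>
      eLpNorm (projG ((2 : ℝ) ^ n) ((2 : ℝ) ^ n * (m.1 : ℝ), (2 : ℝ) ^ n * (m.2 : ℝ)) φ) 2 volume


open FourierTransform in
lemma planch {E : Type*} [NormedAddCommGroup E] [InnerProductSpace ℝ E] [FiniteDimensional ℝ E]
    [MeasurableSpace E] [BorelSpace E] (g : E → ℂ) (hg1 : Integrable g) (hg2 : MemLp g 2) :
    eLpNorm g 2 volume ≤ eLpNorm (𝓕⁻ g) 2 volume := by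
  have hc : Continuous (𝓕⁻ g) :=
    VectorFourier.fourierIntegral_continuous (L := -innerₗ E) Real.continuous_fourierChar
      (show Continuous fun p : E × E => -inner ℝ p.1 p.2 by fun_prop) hg1
  by_cases h : eLpNorm (𝓕⁻ g) 2 volume = ∞
  · rw [h]; exact le_top
  have hm : MemLp (𝓕⁻ g) 2 volume := ⟨hc.aestronglyMeasurable, lt_top_iff_ne_top.2 h⟩
  have key : hm.toLp _ = 𝓕⁻ (hg2.toLp g) := by
    have hinj := LinearMap.ker_eq_bot.1
      (Lp.ker_toTemperedDistributionCLM_eq_bot (E := E) (F := ℂ) (μ := volume) (p := 2))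
    apply hinj
    change (Lp.toTemperedDistribution (hm.toLp _)) = Lp.toTemperedDistribution (𝓕⁻ (hg2.toLp g))
    rw [← Lp.fourierInv_toTemperedDistribution_eq]
    ext s
    rw [TemperedDistribution.fourierInv_apply, Lp.toTemperedDistribution_apply,
      Lp.toTemperedDistribution_apply]
    have h1 : ∫ x, s x • (hm.toLp _ : E → ℂ) x = ∫ x, s x • (𝓕⁻ g) x := by
      apply integral_congr_ae
      filter_upwards [hm.coeFn_toLp] with x hx
      rw [hx]
    have h2 : ∫ x, (𝓕⁻ s) x • (hg2.toLp g : E → ℂ) x = ∫ x, (𝓕⁻ s) x • g x := by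
      apply integral_congr_ae
      filter_upwards [hg2.coeFn_toLp] with x hx
      rw [hx]
    rw [h1, h2]
    have := VectorFourier.integral_bilin_fourierIntegral_eq_flip (ContinuousLinearMap.mul ℂ ℂ)
      (L := -innerₗ E) Real.continuous_fourierChar
      (show Continuous fun p : E × E => -inner ℝ p.1 p.2 by fun_prop) (s.integrable (μ := volume)) hg1
    have hf : (-innerₗ E).flip = -innerₗ E := by
      ext x y; simp [real_inner_comm]
    rw [hf] at this
    rw [SchwartzMap.fourierInv_coe]
    exact this.symm
  have e1 : ‖hm.toLp _‖ = ‖hg2.toLp g‖ := by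
    rw [key]
    exact (Lp.fourierTransformₗᵢ E ℂ).symm.norm_map _
  rw [Lp.norm_toLp, Lp.norm_toLp] at e1
  exact ((ENNReal.toReal_eq_toReal_iff' hm.2.ne hg2.2.ne).1 e1).symm.le

/-- discrete part: inner Hölder -/
lemma holder_m {ι : Type*} (p s : ℝ) (hp1 : 1 ≤ p) (hs : s = 1 - 1 / p) (hs2 : s < 1/2)
    (a b : ι → ℝ≥0∞) (X Y : ℝ≥0∞) (hX : ∑' m, b m ≤ X) (hY : ∀ m, b m ≤ Y) :
    ∑' m, a m * (b m) ^ (1/2 : ℝ) ≤ (∑' m, a m ^ p) ^ (1 / p) * (X ^ s * Y ^ (1/2 - s)) := by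
  rcases hp1.eq_or_lt with rfl | hp
  · have : s = 0 := by rw [hs]; norm_num
    subst this
    simp only [ENNReal.rpow_one, ENNReal.rpow_zero, one_mul, sub_zero, div_one]
    rw [← ENNReal.tsum_mul_right]
    exact ENNReal.tsum_le_tsum fun m => by gcongr; exact hY m
  · have hp0 : 0 < p := by linarith
    have hs0 : 0 < s := by
      rw [hs, sub_pos, div_lt_one hp0]; exact hp
    set r : ℝ := 1 / s with hr
    have hr2 : 2 < r := by rw [hr, lt_div_iff₀ hs0]; linarith
    have hc : p.HolderConjugate r := by
      rw [Real.holderConjugate_iff]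
      refine ⟨hp, ?_⟩
      rw [hr, hs]; simp
    have h1 : ∑' m, a m * (b m) ^ (1/2 : ℝ) ≤
        (∑' m, a m ^ p) ^ (1 / p) * (∑' m, ((b m) ^ (1/2 : ℝ)) ^ r) ^ (1 / r) := by
      rw [ENNReal.tsum_eq_iSup_sum]
      refine iSup_le fun t => (ENNReal.inner_le_Lp_mul_Lq t a _ hc).trans ?_
      gcongr <;> first | positivity | exact ENNReal.sum_le_tsum _
    refine h1.trans ?_
    gcongr
    have h2 : ∑' m, ((b m) ^ (1/2 : ℝ)) ^ r ≤ X * Y ^ (r / 2 - 1) := by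
      refine le_trans ?_ (mul_le_mul_left hX _)
      rw [← ENNReal.tsum_mul_right]
      refine ENNReal.tsum_le_tsum fun m => ?_
      rw [← ENNReal.rpow_mul]
      have : (1/2 * r) = 1 + (r / 2 - 1) := by ring
      rw [this, ENNReal.rpow_add_of_nonneg _ _ (by norm_num) (by linarith), ENNReal.rpow_one]
      gcongr
      · linarith
      · exact hY m
    calc _ ≤ (X * Y ^ (r / 2 - 1)) ^ (1 / r) := by gcongr
      _ = _ := by
        rw [ENNReal.mul_rpow_of_nonneg _ _ (by positivity), ← ENNReal.rpow_mul]
        congr 2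
        · rw [hr]; simp
        · rw [hr]; field_simp

lemma le_lpS_like {ι : Type*} (q : ℝ) (hq : 1 ≤ q) (f : ι → ℝ≥0∞) (i : ι) :
    f i ≤ (∑' i, f i ^ q) ^ (1 / q) := by
  have : f i = (f i ^ q) ^ (1 / q) := by
    rw [← ENNReal.rpow_mul, mul_one_div_cancel (by linarith), ENNReal.rpow_one]
  rw [this]
  gcongr
  exact ENNReal.le_tsum i

def dot3 (z ζ : R3) : ℝ := z.1 * ζ.1 + z.2.1 * ζ.2.1 + z.2.2 * ζ.2.2

lemma exists_L : ∃ L : EuclideanSpace ℝ (Fin 3) ≃L[ℝ] R3,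
    ∀ v w, dot3 (L v) (L w) = 2 * Real.pi * inner ℝ v w := by
  have hpi : 0 < Real.sqrt (2 * Real.pi) := Real.sqrt_pos.2 (by positivity)
  set c := Real.sqrt (2 * Real.pi) with hc
  have hcc : c * c = 2 * Real.pi := Real.mul_self_sqrt (by positivity)
  let L : EuclideanSpace ℝ (Fin 3) ≃ₗ[ℝ] R3 :=
    { toFun := fun v => (c * v 0, c * v 1, c * v 2)
      invFun := fun z => !₂[c⁻¹ * z.1, c⁻¹ * z.2.1, c⁻¹ * z.2.2]
      map_add' := fun v w => by simp [mul_add]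
      map_smul' := fun a v => by simp; refine ⟨?_, ?_, ?_⟩ <;> ring
      left_inv := fun v => by
        ext i; fin_cases i <;> simp [hpi.ne']
      right_inv := fun z => by
        ext <;> simp [hpi.ne'] }
  refine ⟨L.toContinuousLinearEquiv, fun v w => ?_⟩
  change (c * v 0) * (c * w 0) + (c * v 1) * (c * w 1) + (c * v 2) * (c * w 2) = _
  rw [← hcc, PiLp.inner_apply, Fin.sum_univ_three]
  simp
  ring

lemma exists_c (L : EuclideanSpace ℝ (Fin 3) ≃L[ℝ] R3) : ∃ c : NNReal, c ≠ 0 ∧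
    (volume : Measure R3) = c • (volume : Measure (EuclideanSpace ℝ (Fin 3))).map L := by
  have : (volume : Measure (ℝ × ℝ)).IsAddHaarMeasure := by
    rw [Measure.volume_eq_prod]; infer_instance
  have : (volume : Measure R3).IsAddHaarMeasure := by
    rw [Measure.volume_eq_prod]; infer_instance
  have : ((volume : Measure (EuclideanSpace ℝ (Fin 3))).map L).IsAddHaarMeasure :=
    L.isAddHaarMeasure_map _
  have h : (volume : Measure R3) = _ :=
    Measure.isAddLeftInvariant_eq_smul (volume : Measure R3) ((volume : Measure (EuclideanSpace ℝ (Fin 3))).map L)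
  refine ⟨_, ?_, h⟩
  intro h0
  rw [h0] at h
  simp only [zero_smul] at h
  exact NeZero.ne (volume : Measure R3) h

lemma Gam_meas (l : ℝ) (k : ℝ × ℝ) : MeasurableSet (Gam l k) := by
  unfold Gam
  measurability

open FourierTransform in
lemma transfer : ∃ K : NNReal, ∀ ψ : SchwartzMap R3 ℂ, ∃ h : SchwartzMap R3 ℂ,
    ∀ φ : SchwartzMap R3 ℂ, ∃ F : R3 → ℂ, Continuous F ∧
      (‖∫ z : R3, φ z * ψ z‖ₑ ≤ K * ∫⁻ z, ‖F z‖ₑ * ‖h z‖ₑ) ∧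
      ∀ l k, (∫⁻ z in Gam l k, ‖F z‖ₑ ^ (2:ℝ)) ^ (1/2 : ℝ) ≤ K * eLpNorm (projG l k φ) 2 volume := by
  obtain ⟨L, hL⟩ := exists_L
  obtain ⟨c, hc0, hc⟩ := exists_c L
  have hemb : MeasurableEmbedding L := L.toHomeomorph.measurableEmbedding
  have hI : ∀ f : R3 → ℂ, ∫ z, f z = (c : ℂ) * ∫ v, f (L v) := by
    intro f
    rw [hc, integral_smul_nnreal_measure, hemb.integral_map]
    simp [NNReal.smul_def]
  have hN : ∀ f : R3 → ℂ, eLpNorm f 2 volume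
      = (c : ℝ≥0∞) ^ (1/2 : ℝ) * eLpNorm (fun v => f (L v)) 2 volume := by
    intro f
    rw [hc]
    change eLpNorm f 2 ((c : ℝ≥0∞) • _) = _
    rw [eLpNorm_smul_measure_of_ne_top (by simp), hemb.eLpNorm_map_measure]
    simp [Function.comp_def]
  have hl : ∀ f : R3 → ℝ≥0∞, ∫⁻ z, f z = (c : ℝ≥0∞) * ∫⁻ v, f (L v) := by
    intro f
    rw [hc]
    change lintegral ((c : ℝ≥0∞) • _) f = _
    rw [lintegral_smul_measure, hemb.lintegral_map]
    simp
  let T : SchwartzMap R3 ℂ → SchwartzMap (EuclideanSpace ℝ (Fin 3)) ℂ :=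
    fun f => SchwartzMap.compCLMOfContinuousLinearEquiv ℂ L f
  let T' : SchwartzMap (EuclideanSpace ℝ (Fin 3)) ℂ → SchwartzMap R3 ℂ :=
    fun f => SchwartzMap.compCLMOfContinuousLinearEquiv ℂ L.symm f
  let S : SchwartzMap R3 ℂ → SchwartzMap (EuclideanSpace ℝ (Fin 3)) ℂ := fun f => 𝓕 (T f)
  have hft : ∀ φ : SchwartzMap R3 ℂ, ∀ w, ft3 (fun z => φ z) (L w) = c * S φ w := by
    intro φ w
    unfold ft3
    rw [hI, show S φ w = 𝓕 (T φ) w from rfl, SchwartzMap.fourier_coe, Real.fourier_eq']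
    congr 1
    refine integral_congr_ae (Filter.Eventually.of_forall fun v => ?_)
    have := hL v w
    unfold dot3 at this
    simp only [this, T, smul_eq_mul]
    congr 2
    push_cast; ring
  have hproj : ∀ φ : SchwartzMap R3 ℂ, ∀ l k v, projG l k φ (L v) =
      c ^ 2 * 𝓕⁻ ((L ⁻¹' (Gam l k)).indicator (S φ : EuclideanSpace ℝ (Fin 3) → ℂ)) v := by
    intro φ l k v
    unfold projG
    rw [← integral_indicator (Gam_meas l k), hI, Real.fourierInv_eq', pow_two, mul_assoc]
    refine congrArg _ ?_
    rw [← integral_const_mul]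
    refine integral_congr_ae (Filter.Eventually.of_forall fun w => ?_)
    have := hL v w
    unfold dot3 at this
    simp only [smul_eq_mul]
    by_cases hw : L w ∈ Gam l k
    · rw [Set.indicator_of_mem hw, Set.indicator_of_mem (show w ∈ L ⁻¹' Gam l k from hw)]
      rw [hft, this]
      rw [show Complex.I * ((2 * Real.pi * inner ℝ v w : ℝ) : ℂ) =
        ((2 * Real.pi * inner ℝ w v : ℝ) : ℂ) * Complex.I by rw [real_inner_comm]; ring]
      ring
    · rw [Set.indicator_of_notMem hw, Set.indicator_of_notMem (show w ∉ L ⁻¹' Gam l k from hw)]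
      simp
  have hmain : ∀ φ : SchwartzMap R3 ℂ, ∀ l k,
      eLpNorm ((L ⁻¹' (Gam l k)).indicator (S φ : EuclideanSpace ℝ (Fin 3) → ℂ)) 2 volume * (c : ℝ≥0∞) ^ (5/2 : ℝ)
        ≤ eLpNorm (projG l k φ) 2 volume := by
    intro φ l k
    have hm : MeasurableSet (L ⁻¹' (Gam l k)) := hemb.measurable (Gam_meas l k)
    have h1 := planch ((L ⁻¹' (Gam l k)).indicator (S φ : EuclideanSpace ℝ (Fin 3) → ℂ))
      ((S φ).integrable.indicator hm) (((S φ).memLp 2 volume).indicator hm)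
    rw [hN]
    simp_rw [hproj]
    rw [show (fun v => (c:ℂ) ^ 2 * 𝓕⁻ ((L ⁻¹' (Gam l k)).indicator (S φ : EuclideanSpace ℝ (Fin 3) → ℂ)) v)
      = ((c:ℂ) ^ 2) • 𝓕⁻ ((L ⁻¹' (Gam l k)).indicator (S φ : EuclideanSpace ℝ (Fin 3) → ℂ)) from rfl, eLpNorm_const_smul]
    have hcn : ‖(c : ℂ) ^ 2‖ₑ = (c : ℝ≥0∞) ^ (2 : ℝ) := by
      rw [enorm_pow]
      simp [enorm_eq_nnnorm]
    rw [hcn, ← mul_assoc, ← ENNReal.rpow_add_of_nonneg _ _ (by norm_num) (by norm_num), mul_comm]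
    norm_num
    gcongr
  let F : SchwartzMap R3 ℂ → SchwartzMap R3 ℂ := fun φ => T' (S φ)
  have hF : ∀ φ v, F φ (L v) = S φ v := by
    intro φ v
    simp [F, T']
  refine ⟨1 + c ^ (1/2 : ℝ) * (c ^ (5/2 : ℝ))⁻¹, fun ψ => ⟨T' (𝓕⁻ (T ψ)),
    fun φ => ⟨F φ, (F φ).continuous, ?_, ?_⟩⟩⟩
  · refine le_trans ?_ (show 1 * _ ≤ _ from mul_le_mul_left (by simp) _)
    rw [one_mul, hl, hI, enorm_mul]
    have h1 : ‖((c : ℝ) : ℂ)‖ₑ = c := by simp [enorm_eq_nnnorm]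
    rw [h1]
    gcongr
    have h2 : ∫ v, φ (L v) * ψ (L v) = ∫ v, S φ v * (𝓕⁻ (T ψ)) v := by
      rw [show S φ = 𝓕 (T φ) from rfl, SchwartzMap.integral_fourier_mul_eq,
        FourierTransform.fourier_fourierInv_eq]
      rfl
    rw [h2]
    refine (enorm_integral_le_lintegral_enorm _).trans (le_of_eq ?_)
    refine lintegral_congr fun v => ?_
    rw [hF, enorm_mul]
    simp [T']
  · intro l k
    have h1 : (∫⁻ z in Gam l k, ‖F φ z‖ₑ ^ (2:ℝ)) ^ (1/2 : ℝ) =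
        eLpNorm ((Gam l k).indicator (F φ)) 2 volume := by
      rw [eLpNorm_indicator_eq_eLpNorm_restrict (Gam_meas l k),
        eLpNorm_eq_lintegral_rpow_enorm_toReal (by norm_num) (by norm_num)]
      simp
    have h2 : (fun v => (Gam l k).indicator (F φ) (L v)) =
        (L ⁻¹' (Gam l k)).indicator (S φ : EuclideanSpace ℝ (Fin 3) → ℂ) := by
      ext v
      simp only [Set.indicator, Set.mem_preimage, hF]
      rfl
    rw [h1, hN, h2]
    have hc5 : c ^ (5/2 : ℝ) ≠ 0 := by
      intro h; rw [NNReal.rpow_eq_zero_iff] at h; exact hc0 h.1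
    have e5 : ((c ^ (5/2 : ℝ) : NNReal) : ℝ≥0∞) = (c : ℝ≥0∞) ^ (5/2 : ℝ) :=
      ENNReal.coe_rpow_of_nonneg _ (by norm_num)
    have e1 : ((c ^ (1/2 : ℝ) : NNReal) : ℝ≥0∞) = (c : ℝ≥0∞) ^ (1/2 : ℝ) :=
      ENNReal.coe_rpow_of_nonneg _ (by norm_num)
    have hm := hmain φ l k
    rw [← e5] at hm
    rw [← e1]
    set A := eLpNorm ((L ⁻¹' (Gam l k)).indicator (S φ : EuclideanSpace ℝ (Fin 3) → ℂ)) 2 volume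
    calc ((c ^ (1/2 : ℝ) : NNReal) : ℝ≥0∞) * A
        = ((c ^ (1/2 : ℝ) * (c ^ (5/2 : ℝ))⁻¹ : NNReal) : ℝ≥0∞) *
          (A * ((c ^ (5/2 : ℝ) : NNReal) : ℝ≥0∞)) := by
          rw [mul_comm A, ← mul_assoc, ← ENNReal.coe_mul, mul_assoc, inv_mul_cancel₀ hc5, mul_one]
      _ ≤ _ := by
          gcongr
          simp
def Gp (l : ℝ) (m : ℤ × ℤ) : Set R3 :=
  {ζ : R3 | (l ≤ |ζ.1| ∧ |ζ.1| < 2 * l) ∧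
    round (ζ.2.1 / ζ.1 / l) = m.1 ∧ round (ζ.2.2 / ζ.1 / l) = m.2}

lemma round_aux (l x : ℝ) (hl : 0 < l) (m : ℤ) (h : round (x / l) = m) : |x - l * m| ≤ l / 2 := by
  have := abs_sub_round (x / l)
  rw [h] at this
  have e : x - l * m = l * (x / l - m) := by field_simp
  rw [e, abs_mul, abs_of_pos hl]
  nlinarith

lemma Gp_sub (l : ℝ) (hl : 0 < l) (m : ℤ × ℤ) : Gp l m ⊆ Gam l (l * m.1, l * m.2) := by
  rintro ζ ⟨⟨h1, h2⟩, h3, h4⟩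
  exact ⟨h1, h2, max_le (round_aux _ _ hl _ h3) (round_aux _ _ hl _ h4)⟩

lemma round_meas : Measurable (round : ℝ → ℤ) := by
  have : (round : ℝ → ℤ) = fun x => ⌊x + 1/2⌋ := by ext x; exact round_eq x
  rw [this]
  exact Int.measurable_floor.comp (measurable_id.add_const _)

lemma strip_meas (l : ℝ) : MeasurableSet {x : ℝ | l ≤ |x| ∧ |x| < 2 * l} := by
  measurability

lemma Gp_meas (l : ℝ) (m : ℤ × ℤ) : MeasurableSet (Gp l m) := by
  have h0 : MeasurableSet {ζ : R3 | l ≤ |ζ.1| ∧ |ζ.1| < 2 * l} := (strip_meas l).preimage measurable_fst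
  have h1 : Measurable fun ζ : R3 => round (ζ.2.1 / ζ.1 / l) :=
    round_meas.comp (by fun_prop)
  have h2 : Measurable fun ζ : R3 => round (ζ.2.2 / ζ.1 / l) :=
    round_meas.comp (by fun_prop)
  exact h0.inter ((h1 (measurableSet_singleton m.1)).inter (h2 (measurableSet_singleton m.2)))

lemma Gp_disj (l : ℝ) : Pairwise (Function.onFun Disjoint (Gp l)) := by
  intro m m' hne
  refine Set.disjoint_left.2 fun ζ h h' => hne ?_
  exact Prod.ext (h.2.1.symm.trans h'.2.1) (h.2.2.symm.trans h'.2.2)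

lemma Gp_cover (ζ : R3) (h : ζ.1 ≠ 0) : ∃ n : ℤ, ∃ m, ζ ∈ Gp ((2:ℝ) ^ n) m := by
  obtain ⟨n, h1, h2⟩ := exists_mem_Ico_zpow (abs_pos.2 h) (one_lt_two)
  refine ⟨n, (_, _), ⟨h1, ?_⟩, rfl, rfl⟩
  rw [zpow_add_one₀ (by norm_num)] at h2
  linarith

lemma strip_vol (l : ℝ) : volume {x : ℝ | l ≤ |x| ∧ |x| < 2 * l} ≤ ENNReal.ofReal (4 * l) := by
  calc _ ≤ volume (Set.Icc (-(2 * l)) (2 * l)) := by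
        apply measure_mono
        rintro x ⟨_, h⟩
        exact abs_le.1 h.le
    _ = _ := by rw [Real.volume_Icc]; congr 1; ring

lemma Gam_vol (l : ℝ) (hl : 0 < l) (k : ℝ × ℝ) :
    volume (Gam l k) ≤ ENNReal.ofReal (16 * l ^ 5) := by
  have hi : ∀ x : ℝ, l ≤ |x| → |x| < 2 * l → ∀ y a : ℝ, |y / x - a| ≤ l / 2 →
      y ∈ Set.Icc (x * a - l ^ 2) (x * a + l ^ 2) := by
    intro x h1 h2 y a h
    have hx : x ≠ 0 := by intro h0; rw [h0, abs_zero] at h1; linarith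
    have e : y - x * a = x * (y / x - a) := by field_simp
    have : |y - x * a| ≤ l ^ 2 := by
      rw [e, abs_mul]
      nlinarith [abs_nonneg (y / x - a), abs_nonneg x]
    rw [abs_le] at this
    constructor <;> linarith
  rw [Measure.volume_eq_prod, Measure.prod_apply (Gam_meas l k)]
  calc _ ≤ ∫⁻ x, {x : ℝ | l ≤ |x| ∧ |x| < 2 * l}.indicator
          (fun _ => ENNReal.ofReal (4 * l ^ 4)) x := by
        refine lintegral_mono fun x => ?_
        by_cases hx : l ≤ |x| ∧ |x| < 2 * l
        · rw [Set.indicator_of_mem (show x ∈ {x : ℝ | l ≤ |x| ∧ |x| < 2 * l} from hx)]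
          calc _ ≤ volume ((Set.Icc (x * k.1 - l ^ 2) (x * k.1 + l ^ 2)) ×ˢ
                  (Set.Icc (x * k.2 - l ^ 2) (x * k.2 + l ^ 2))) := by
                apply measure_mono
                rintro y ⟨_, _, h⟩
                exact ⟨hi x hx.1 hx.2 _ _ ((le_max_left _ _).trans h),
                  hi x hx.1 hx.2 _ _ ((le_max_right _ _).trans h)⟩
            _ ≤ _ := by
                rw [Measure.volume_eq_prod, Measure.prod_prod, Real.volume_Icc, Real.volume_Icc,
                  ← ENNReal.ofReal_mul (by nlinarith)]
                apply ENNReal.ofReal_le_ofReal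
                apply le_of_eq; ring
        · have : Prod.mk x ⁻¹' Gam l k = ∅ := by
            ext y
            simp only [Set.mem_preimage, Set.mem_empty_iff_false, iff_false]
            exact fun h => hx ⟨h.1, h.2.1⟩
          rw [this]; simp
    _ ≤ _ := by
        rw [lintegral_indicator (strip_meas l), setLIntegral_const]
        calc _ ≤ ENNReal.ofReal (4 * l ^ 4) * ENNReal.ofReal (4 * l) := by
              gcongr; exact strip_vol l
          _ = _ := by
              rw [← ENNReal.ofReal_mul (by positivity)]; congr 1; ring

lemma h_est (h : SchwartzMap R3 ℂ) : ∃ K : NNReal, ∀ n : ℤ,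
    (∀ m, ∫⁻ z in Gp ((2:ℝ) ^ n) m, ‖h z‖ₑ ^ (2:ℝ) ≤ K * min 1 (((2:ℝ≥0∞) ^ n) ^ (5:ℝ))) ∧
    ∑' m, ∫⁻ z in Gp ((2:ℝ) ^ n) m, ‖h z‖ₑ ^ (2:ℝ) ≤ K * min 1 ((2:ℝ≥0∞) ^ n) := by
  have : (volume : Measure (ℝ × ℝ)).IsAddHaarMeasure := by
    rw [Measure.volume_eq_prod]; infer_instance
  have : (volume : Measure R3).IsAddHaarMeasure := by
    rw [Measure.volume_eq_prod]; infer_instance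
  have hN : ∫⁻ z, ‖h z‖ₑ ^ (2:ℝ) < ∞ := by
    have := (h.memLp 2 volume).2
    rw [eLpNorm_eq_lintegral_rpow_enorm_toReal (by norm_num) (by norm_num)] at this
    simpa [ENNReal.rpow_lt_top_iff_of_pos] using this
  -- decay
  obtain ⟨B, hB0, hB⟩ : ∃ B : ℝ, 0 ≤ B ∧ ∀ z, (1 + ‖z‖) ^ 2 * ‖h z‖ ≤ B := by
    have := fun z => SchwartzMap.one_add_le_sup_seminorm_apply (𝕜 := ℝ) (m := (2, 0)) le_rfl le_rfl h z
    simp only [norm_iteratedFDeriv_zero] at this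
    exact ⟨_, le_trans (by positivity) (this 0), this⟩
  have hsup : ∀ z, ‖h z‖ₑ ^ (2:ℝ) ≤ ENNReal.ofReal (B ^ 2) := by
    intro z
    rw [← ofReal_norm, ENNReal.ofReal_rpow_of_nonneg (norm_nonneg _) (by norm_num)]
    apply ENNReal.ofReal_le_ofReal
    rw [Real.rpow_two]
    have := hB z
    have h1 : ‖h z‖ ≤ (1 + ‖z‖) ^ 2 * ‖h z‖ :=
      le_mul_of_one_le_left (norm_nonneg _) (by nlinarith [norm_nonneg z])
    gcongr; linarith
  have hdec : ∀ z : R3, ‖h z‖ₑ ^ (2:ℝ) ≤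
      ENNReal.ofReal (B ^ 2) * ENNReal.ofReal ((1 + ‖z.2‖) ^ (-4 : ℝ)) := by
    intro z
    rw [← ofReal_norm, ENNReal.ofReal_rpow_of_nonneg (norm_nonneg _) (by norm_num),
      ← ENNReal.ofReal_mul (by positivity)]
    apply ENNReal.ofReal_le_ofReal
    have h0 : 0 < 1 + ‖z.2‖ := by positivity
    rw [Real.rpow_two, Real.rpow_neg h0.le, ← div_eq_mul_inv,
      le_div_iff₀ (by positivity), show (4:ℝ) = ((4:ℕ):ℝ) by norm_num, Real.rpow_natCast]
    have h2 : (1 + ‖z.2‖) ^ 2 * ‖h z‖ ≤ B := by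
      refine le_trans ?_ (hB z)
      gcongr
      exact norm_snd_le z
    calc _ = ((1 + ‖z.2‖) ^ 2 * ‖h z‖) ^ 2 := by ring
      _ ≤ _ := by gcongr
  have hJ : ∫⁻ y : ℝ × ℝ, ENNReal.ofReal ((1 + ‖y‖) ^ (-4 : ℝ)) < ∞ := by
    have := (integrable_one_add_norm (E := ℝ × ℝ) (μ := (volume : Measure ℝ).prod volume)
      (r := 4) (by simp; norm_num)).lintegral_lt_top
    exact this
  set N := ∫⁻ z, ‖h z‖ₑ ^ (2:ℝ)
  set J := ∫⁻ y : ℝ × ℝ, ENNReal.ofReal ((1 + ‖y‖) ^ (-4 : ℝ))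
  set D := ENNReal.ofReal (B ^ 2)
  have hD : D < ∞ := ENNReal.ofReal_lt_top
  let K0 : ℝ≥0∞ := N + D * 16 + D * J * 4
  have hK0 : K0 ≠ ∞ := by
    simp only [K0]
    exact ENNReal.add_ne_top.2 ⟨ENNReal.add_ne_top.2 ⟨hN.ne, ENNReal.mul_ne_top hD.ne (by simp)⟩,
      ENNReal.mul_ne_top (ENNReal.mul_ne_top hD.ne hJ.ne) (by simp)⟩
  refine ⟨K0.toNNReal, fun n => ?_⟩
  rw [ENNReal.coe_toNNReal hK0]
  have hl : (0:ℝ) < 2 ^ n := by positivity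
  have e2 : ENNReal.ofReal ((2:ℝ) ^ n) = (2:ℝ≥0∞) ^ n := by
    rw [← Real.rpow_intCast, ← ENNReal.ofReal_rpow_of_pos (by norm_num), ENNReal.rpow_intCast]
    simp
  constructor
  · intro m
    rw [mul_min_of_nonneg _ _ (by simp)]
    refine le_min ?_ ?_
    · rw [mul_one]
      refine (setLIntegral_le_lintegral _ _).trans ?_
      simp only [K0, add_assoc]
      exact le_self_add
    · calc _ ≤ ∫⁻ z in Gp ((2:ℝ) ^ n) m, D := lintegral_mono fun z => hsup z
        _ = D * volume (Gp ((2:ℝ) ^ n) m) := setLIntegral_const _ _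
        _ ≤ D * ENNReal.ofReal (16 * ((2:ℝ) ^ n) ^ 5) := by
          gcongr
          exact (measure_mono (Gp_sub _ hl m)).trans (Gam_vol _ hl _)
        _ = D * 16 * ((2:ℝ≥0∞) ^ n) ^ (5:ℝ) := by
          rw [ENNReal.ofReal_mul (by norm_num), ENNReal.ofReal_pow hl.le, e2, mul_assoc]
          norm_num
        _ ≤ _ := by
          gcongr
          simp only [K0]
          exact le_add_right le_add_self
  · rw [← lintegral_iUnion (Gp_meas _) (Gp_disj _), mul_min_of_nonneg _ _ (by simp)]
    refine le_min ?_ ?_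
    · rw [mul_one]
      refine (setLIntegral_le_lintegral _ _).trans ?_
      simp only [K0, add_assoc]
      exact le_self_add
    · calc _ ≤ ∫⁻ z in {x : ℝ | (2:ℝ) ^ n ≤ |x| ∧ |x| < 2 * (2:ℝ) ^ n} ×ˢ (Set.univ : Set (ℝ × ℝ)),
              ‖h z‖ₑ ^ (2:ℝ) := by
            apply lintegral_mono_set
            refine Set.iUnion_subset fun m z hz => ⟨hz.1, trivial⟩
        _ ≤ ∫⁻ z in {x : ℝ | (2:ℝ) ^ n ≤ |x| ∧ |x| < 2 * (2:ℝ) ^ n} ×ˢ (Set.univ : Set (ℝ × ℝ)),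
              D * ENNReal.ofReal ((1 + ‖z.2‖) ^ (-4 : ℝ)) := lintegral_mono fun z => hdec z
        _ = D * J * volume {x : ℝ | (2:ℝ) ^ n ≤ |x| ∧ |x| < 2 * (2:ℝ) ^ n} := by
            rw [Measure.volume_eq_prod, ← Measure.prod_restrict, Measure.restrict_univ]
            have := lintegral_prod_mul (μ := volume.restrict {x : ℝ | (2:ℝ) ^ n ≤ |x| ∧ |x| < 2 * (2:ℝ) ^ n})
              (ν := (volume : Measure (ℝ × ℝ))) (f := fun _ => D)
              (g := fun y => ENNReal.ofReal ((1 + ‖y‖) ^ (-4 : ℝ))) (by fun_prop)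
              (by fun_prop)
            rw [this, setLIntegral_const]
            ring
        _ ≤ D * J * ENNReal.ofReal (4 * 2 ^ n) := by gcongr; exact strip_vol _
        _ = D * J * 4 * (2:ℝ≥0∞) ^ n := by
            rw [ENNReal.ofReal_mul (by norm_num), e2]; norm_num; ring
        _ ≤ _ := by
            gcongr
            exact le_add_self

lemma le_lpS {ι : Type*} (q : ℝ≥0∞) (hq : 1 ≤ q) (f : ι → ℝ≥0∞) (i : ι) : f i ≤ lpS q f := by
  unfold lpS
  split_ifs with hqt
  · exact le_iSup f i
  · have hq1 : 1 ≤ q.toReal := by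
      rw [← ENNReal.toReal_one]; exact ENNReal.toReal_mono hqt hq
    exact le_lpS_like q.toReal hq1 f i

lemma W_sum (s : ℝ) (hs0 : 0 ≤ s) (hs : s < 1/2) (K : NNReal) :
    ∑' n : ℤ, ((2:ℝ≥0∞) ^ n) ^ (-(1/2) : ℝ) * ((K * min 1 ((2:ℝ≥0∞) ^ n)) ^ s *
      (K * min 1 (((2:ℝ≥0∞) ^ n) ^ (5:ℝ))) ^ (1/2 - s)) ≠ ∞ := by
  have hs' : 0 ≤ 1/2 - s := by linarith
  set G : ℝ≥0∞ := (K : ℝ≥0∞) ^ s * (K : ℝ≥0∞) ^ (1/2 - s) with hG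
  have hGt : G ≠ ∞ := ENNReal.mul_ne_top (ENNReal.rpow_ne_top_of_nonneg hs0 (by simp))
    (ENNReal.rpow_ne_top_of_nonneg hs' (by simp))
  set ε : ℝ := min (1/2) (2 - 4 * s) with hε
  have hε0 : 0 < ε := lt_min (by norm_num) (by linarith)
  set x : ℝ := (2:ℝ) ^ (-ε) with hx
  have hx0 : 0 < x := by positivity
  have hx1 : x < 1 := Real.rpow_lt_one_of_one_lt_of_neg (by norm_num) (by linarith)
  have hsum : Summable fun n : ℤ => x ^ n.natAbs := by
    rw [summable_int_iff_summable_nat_and_neg]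
    have := summable_geometric_of_lt_one hx0.le hx1
    constructor <;> simpa using this
  have hW : ∀ n : ℤ, ((2:ℝ≥0∞) ^ n) ^ (-(1/2) : ℝ) * ((K * min 1 ((2:ℝ≥0∞) ^ n)) ^ s *
      (K * min 1 (((2:ℝ≥0∞) ^ n) ^ (5:ℝ))) ^ (1/2 - s)) ≤ G * ENNReal.ofReal (x ^ n.natAbs) := by
    intro n
    have e : ENNReal.ofReal (x ^ n.natAbs) = (2:ℝ≥0∞) ^ (-ε * |(n:ℝ)|) := by
      rw [hx, ← Real.rpow_natCast, ← Real.rpow_mul (by norm_num),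
        ← ENNReal.ofReal_rpow_of_pos (by norm_num)]
      simp
    rw [e, ← ENNReal.rpow_intCast]
    simp only [← ENNReal.rpow_mul]
    rcases le_total 0 n with hn | hn
    · have hn' : (0:ℝ) ≤ n := by exact_mod_cast hn
      calc _ ≤ (2:ℝ≥0∞) ^ ((n:ℝ) * (-(1/2))) * ((K * 1) ^ s * (K * 1) ^ (1/2 - s)) := by
            gcongr <;> exact min_le_left _ _
        _ = G * (2:ℝ≥0∞) ^ ((n:ℝ) * (-(1/2))) := by rw [mul_one, mul_comm]
        _ ≤ _ := by
          gcongr G * ?_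
          refine ENNReal.rpow_le_rpow_of_exponent_le (by norm_num) ?_
          rw [abs_of_nonneg hn']
          nlinarith [min_le_left (1/2) (2 - 4 * s)]
    · have hn' : (n:ℝ) ≤ 0 := by exact_mod_cast hn
      calc _ ≤ (2:ℝ≥0∞) ^ ((n:ℝ) * (-(1/2))) * ((K * (2:ℝ≥0∞) ^ (n:ℝ)) ^ s *
              (K * (2:ℝ≥0∞) ^ ((n:ℝ) * 5)) ^ (1/2 - s)) := by
            gcongr <;> exact min_le_right _ _
        _ = G * (2:ℝ≥0∞) ^ ((n:ℝ) * (2 - 4 * s)) := by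
            rw [ENNReal.mul_rpow_of_nonneg _ _ hs0, ENNReal.mul_rpow_of_nonneg _ _ hs',
              ← ENNReal.rpow_mul, ← ENNReal.rpow_mul]
            have : (n:ℝ) * (2 - 4 * s) = n * (-(1/2)) + n * s + n * 5 * (1/2 - s) := by ring
            rw [this, ENNReal.rpow_add _ _ (by norm_num) (by norm_num),
              ENNReal.rpow_add _ _ (by norm_num) (by norm_num), hG]
            ring
        _ ≤ _ := by
          gcongr G * ?_
          refine ENNReal.rpow_le_rpow_of_exponent_le (by norm_num) ?_
          rw [abs_of_nonpos hn']
          nlinarith [min_le_right (1/2) (2 - 4 * s)]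
  refine ne_top_of_le_ne_top ?_ (ENNReal.tsum_le_tsum hW)
  rw [ENNReal.tsum_mul_left, ← ENNReal.ofReal_tsum_of_nonneg (fun n => by positivity) hsum]
  exact ENNReal.mul_ne_top hGt ENNReal.ofReal_ne_top

lemma null_fst : ∀ᵐ z : R3, z.1 ≠ 0 := by
  have h : (volume : Measure R3) ((Prod.fst : R3 → ℝ) ⁻¹' {0}) = 0 := by
    rw [Measure.volume_eq_prod, ← Set.prod_univ, Measure.prod_prod]
    simp
  exact measure_eq_zero_iff_ae_notMem.1 h

lemma cover_int (f : R3 → ℝ≥0∞) :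
    ∫⁻ z, f z ≤ ∑' n : ℤ, ∑' m, ∫⁻ z in Gp ((2:ℝ) ^ n) m, f z := by
  have h : ∀ᵐ z : R3, z ∈ ⋃ n : ℤ, ⋃ m, Gp ((2:ℝ) ^ n) m := by
    filter_upwards [null_fst] with z hz
    simpa using Gp_cover z hz
  rw [← setLIntegral_univ, setLIntegral_congr (t := ⋃ n : ℤ, ⋃ m, Gp ((2:ℝ) ^ n) m)
    (Filter.eventuallyEq_univ.2 h).symm]
  refine (lintegral_iUnion_le _ _).trans ?_
  exact ENNReal.tsum_le_tsum fun n => lintegral_iUnion_le _ _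

/-!
STATEMENT 12: for 1 ≤ q ≤ ∞ and 1 ≤ p < 2, the space l^q l^p L² embeds
continuously into the tempered distributions: for every Schwartz ψ there is
C = C(ψ,p,q) with |∫ φψ| ≤ C ‖φ‖_{l^q l^p L²} for all Schwartz φ.
-/
theorem lqlp_embeds_distributions (q p : ℝ≥0∞) (hq : 1 ≤ q) (hp1 : 1 ≤ p) (hp2 : p < 2)
    (ψ : SchwartzMap R3 ℂ) :
    ∃ C : ℝ, 0 < C ∧ ∀ φ : SchwartzMap R3 ℂ,
      ENNReal.ofReal ‖∫ z : R3, φ z * ψ z‖ ≤ ENNReal.ofReal C * lqlpNorm q p φ := by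
  obtain ⟨K1, hK1⟩ := transfer
  obtain ⟨h, hh⟩ := hK1 ψ
  obtain ⟨K2, hK2⟩ := h_est h
  have hpt : p ≠ ∞ := (hp2.trans (by norm_num)).ne
  set r := p.toReal with hr
  have hr1 : 1 ≤ r := by
    rw [hr, ← ENNReal.toReal_one]; exact ENNReal.toReal_mono hpt hp1
  have hr2 : r < 2 := by
    have := (ENNReal.toReal_lt_toReal hpt (by norm_num)).2 hp2
    simpa using this
  set s : ℝ := 1 - 1 / r with hs
  have hs0 : 0 ≤ s := by
    rw [hs, sub_nonneg, div_le_one (by linarith)]; exact hr1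
  have hs2 : s < 1/2 := by
    have : 1/2 < 1 / r := one_div_lt_one_div_of_lt (by linarith) hr2
    rw [hs]; linarith
  have hWt := W_sum s hs0 hs2 K2
  set W : ℤ → ℝ≥0∞ := fun n => ((2:ℝ≥0∞) ^ n) ^ (-(1/2) : ℝ) * ((K2 * min 1 ((2:ℝ≥0∞) ^ n)) ^ s *
      (K2 * min 1 (((2:ℝ≥0∞) ^ n) ^ (5:ℝ))) ^ (1/2 - s)) with hW
  set C0 : ℝ≥0∞ := K1 * (K1 * ∑' n, W n) with hC0
  have hC0t : C0 ≠ ∞ := ENNReal.mul_ne_top (by simp) (ENNReal.mul_ne_top (by simp) hWt)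
  refine ⟨C0.toReal + 1, by positivity, fun φ => ?_⟩
  obtain ⟨F, hFc, hF1, hF2⟩ := hh φ
  rw [ofReal_norm]
  set a : ℤ → ℤ × ℤ → ℝ≥0∞ := fun n m =>
    eLpNorm (projG ((2 : ℝ) ^ n) ((2 : ℝ) ^ n * (m.1 : ℝ), (2 : ℝ) ^ n * (m.2 : ℝ)) φ) 2 volume with ha
  have hcs : ∀ n m, ∫⁻ z in Gp ((2:ℝ) ^ n) m, ‖F z‖ₑ * ‖h z‖ₑ ≤
      K1 * (a n m * (∫⁻ z in Gp ((2:ℝ) ^ n) m, ‖h z‖ₑ ^ (2:ℝ)) ^ (1/2 : ℝ)) := by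
    intro n m
    have h1 := ENNReal.lintegral_mul_le_Lp_mul_Lq (volume.restrict (Gp ((2:ℝ) ^ n) m))
      (Real.HolderConjugate.two_two) (f := fun z => ‖F z‖ₑ) (g := fun z => ‖h z‖ₑ)
      hFc.enorm.aemeasurable h.continuous.enorm.aemeasurable
    refine h1.trans ?_
    rw [← mul_assoc]
    gcongr
    refine le_trans ?_ (hF2 _ _)
    gcongr
    exact Gp_sub _ (by positivity) m
  have hn : ∀ n, ∑' m, ∫⁻ z in Gp ((2:ℝ) ^ n) m, ‖F z‖ₑ * ‖h z‖ₑ ≤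
      K1 * (W n * (((2 : ℝ≥0∞) ^ n) ^ ((1 : ℝ) / 2) * lpS p (a n))) := by
    intro n
    refine (ENNReal.tsum_le_tsum fun m => hcs n m).trans ?_
    rw [ENNReal.tsum_mul_left]
    gcongr
    refine (holder_m r s hr1 hs hs2 (a n) _ _ _ (hK2 n).2 (hK2 n).1).trans (le_of_eq ?_)
    have hl : lpS p (a n) = (∑' m, a n m ^ r) ^ (1 / r) := by
      simp [lpS, hpt, hr]
    have h1 : ((2 : ℝ≥0∞) ^ n) ^ (-(1/2) : ℝ) * ((2 : ℝ≥0∞) ^ n) ^ ((1 : ℝ) / 2) = 1 := by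
      rw [← ENNReal.rpow_add _ _ (by simp [← ENNReal.rpow_intCast]) (by simp [← ENNReal.rpow_intCast])]
      simp
    rw [hl, hW]
    calc _ = (((2 : ℝ≥0∞) ^ n) ^ (-(1/2) : ℝ) * ((2 : ℝ≥0∞) ^ n) ^ ((1 : ℝ) / 2)) *
          ((∑' m, a n m ^ r) ^ (1 / r) * ((K2 * min 1 ((2:ℝ≥0∞) ^ n)) ^ s *
      (K2 * min 1 (((2:ℝ≥0∞) ^ n) ^ (5:ℝ))) ^ (1/2 - s))) := by rw [h1, one_mul]
      _ = _ := by ring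
  have hle : ∀ n, ((2 : ℝ≥0∞) ^ n) ^ ((1 : ℝ) / 2) * lpS p (a n) ≤ lqlpNorm q p φ := by
    intro n
    exact le_lpS q hq (fun n : ℤ => ((2 : ℝ≥0∞) ^ n) ^ ((1 : ℝ) / 2) * lpS p (a n)) n
  calc _ ≤ K1 * ∫⁻ z, ‖F z‖ₑ * ‖h z‖ₑ := hF1
    _ ≤ K1 * ∑' n : ℤ, ∑' m, ∫⁻ z in Gp ((2:ℝ) ^ n) m, ‖F z‖ₑ * ‖h z‖ₑ := by
        gcongr; exact cover_int _
    _ ≤ K1 * ∑' n : ℤ, K1 * (W n * lqlpNorm q p φ) := by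
        gcongr with n
        refine (hn n).trans ?_
        gcongr
        exact hle n
    _ = C0 * lqlpNorm q p φ := by
        rw [ENNReal.tsum_mul_left, ENNReal.tsum_mul_right, hC0]; ring
    _ ≤ _ := by
        gcongr
        rw [ENNReal.ofReal_add (by positivity) (by norm_num), ENNReal.ofReal_toReal hC0t]
        exact le_self_add
end
end
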